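/- arXiv:1807.10527 — 4 statements merged into one kernel-verified Lean document; each statement's English description precedes it below -/
import Mathlib

section
/- Let t ↦ Z_t be a bounded measurable family of 2d×m real matrices on [0,1] and, for s ∈ ℂ, let Φᵗ_s be the fundamental matrix of the complexified Jacobi equation, i.e. the unique absolutely continuous Mat_{2d×2d}(ℂ)-valued solution of dΦ/dt = Z_tˢ (Z_tˢ)ᵀ J Φ with Φ⁰_s = I. Then every entry of Φ¹_s is an entire function of s ∈ ℂ, and there exists a constant c > 0 such that ‖Φ¹_s‖ ≤ c·e^{c|s|} for all s ∈ ℂ. -/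
open MeasureTheory Filter Topology Matrix

noncomputable section

/-- The standard symplectic `2d × 2d` matrix `J = [[0, -I],[I, 0]]`, over `ℂ`. -/
def Jc (d : ℕ) : Matrix (Fin (d + d)) (Fin (d + d)) ℂ :=
  Matrix.reindex finSumFinEquiv finSumFinEquiv (Matrix.fromBlocks 0 (-1) 1 0)

/-- For `Z_t = (Y_t; X_t)`, the complex matrix `Z_tˢ = (s·Y_t; X_t)`:
rows in the top block get multiplied by `s`. -/
def Zs {d m : ℕ} (Z : ℝ → Matrix (Fin (d + d)) (Fin m) ℝ) (s : ℂ) (t : ℝ) :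
    Matrix (Fin (d + d)) (Fin m) ℂ :=
  Matrix.of fun i j => (if (i : ℕ) < d then s else 1) * (Z t i j : ℂ)

attribute [local instance] Matrix.normedAddCommGroup

/-! ### A Grönwall lemma in integral form -/

lemma aux_gronwall {u : ℝ → ℝ} {a K b : ℝ} (hb : 0 ≤ b) (ha : 0 ≤ a) (hK : 0 ≤ K)
    (hu : ContinuousOn u (Set.Icc 0 b)) (hu0 : ∀ t ∈ Set.Icc 0 b, 0 ≤ u t)
    (h : ∀ t ∈ Set.Icc 0 b, u t ≤ a + K * ∫ τ in (0:ℝ)..t, u τ) :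
    ∀ t ∈ Set.Icc 0 b, u t ≤ a * Real.exp (K * t) := by
  have hint : IntervalIntegrable u volume 0 b := hu.intervalIntegrable_of_Icc hb
  have hcont : ContinuousOn (fun t => a + K * ∫ τ in (0:ℝ)..t, u τ) (Set.Icc 0 b) := by
    have := intervalIntegral.continuousOn_primitive_interval' hint Set.left_mem_uIcc
    rw [Set.uIcc_of_le hb] at this
    exact continuousOn_const.add (continuousOn_const.mul this)
  have hder : ∀ x ∈ Set.Ico 0 b, HasDerivWithinAt (fun t => a + K * ∫ τ in (0:ℝ)..t, u τ)
      (K * u x) (Set.Ici x) x := by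
    intro x hx
    have hx' : x ∈ Set.Icc 0 b := ⟨hx.1, hx.2.le⟩
    have hint' : IntervalIntegrable u volume 0 x :=
      hint.mono_set (by
        rw [Set.uIcc_of_le hb, Set.uIcc_of_le hx.1]; exact Set.Icc_subset_Icc_right hx.2.le)
    have hnhds : Set.Icc 0 b ∈ 𝓝[>] x := mem_of_superset (Ioo_mem_nhdsGT hx.2)
      (fun y hy => ⟨hx.1.trans hy.1.le, hy.2.le⟩)
    have hm : StronglyMeasurableAtFilter u (𝓝[>] x) volume :=
      ⟨Set.Icc 0 b, hnhds, hu.aestronglyMeasurable measurableSet_Icc⟩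
    have hc : ContinuousWithinAt u (Set.Ioi x) x := (hu x hx').mono_of_mem_nhdsWithin hnhds
    have := intervalIntegral.integral_hasDerivWithinAt_right (s := Set.Ici x) (t := Set.Ioi x)
      hint' hm hc
    exact (this.const_mul K).const_add a
  have hbd := norm_le_gronwallBound_of_norm_deriv_right_le (δ := a) (K := K) (ε := 0) hcont hder
    (by simp [abs_of_nonneg ha]) (by
      intro x hx
      have hx' : x ∈ Set.Icc 0 b := ⟨hx.1, hx.2.le⟩
      have h1 := hu0 x hx'
      have h2 := h x hx'
      rw [Real.norm_of_nonneg (mul_nonneg hK h1), add_zero]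
      exact mul_le_mul_of_nonneg_left (h2.trans (le_abs_self _)) hK)
  intro t ht
  have := hbd t ht
  rw [gronwallBound_ε0, sub_zero] at this
  exact (h t ht).trans ((le_abs_self _).trans this)

/-! ### Bounded measurable functions on `[0,1]` -/

/-- Bounded and a.e. strongly measurable on `[0,1]`. -/
def BM (c : ℝ → ℂ) : Prop :=
  AEStronglyMeasurable c (volume.restrict (Set.Icc (0:ℝ) 1)) ∧
    ∃ B : ℝ, ∀ t ∈ Set.Icc (0:ℝ) 1, ‖c t‖ ≤ B

lemma BM.const (z : ℂ) : BM fun _ => z :=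
  ⟨aestronglyMeasurable_const, ‖z‖, fun _ _ => le_rfl⟩

lemma BM.add {f g : ℝ → ℂ} (hf : BM f) (hg : BM g) : BM fun t => f t + g t := by
  obtain ⟨hf, B, hB⟩ := hf
  obtain ⟨hg, B', hB'⟩ := hg
  exact ⟨hf.add hg, B + B', fun t ht => (norm_add_le _ _).trans (add_le_add (hB t ht) (hB' t ht))⟩

lemma BM.mul {f g : ℝ → ℂ} (hf : BM f) (hg : BM g) : BM fun t => f t * g t := by
  obtain ⟨hf, B, hB⟩ := hf
  obtain ⟨hg, B', hB'⟩ := hg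
  refine ⟨hf.mul hg, B * B', fun t ht => ?_⟩
  rw [norm_mul]
  exact mul_le_mul (hB t ht) (hB' t ht) (norm_nonneg _) ((norm_nonneg _).trans (hB t ht))

lemma BM.of_continuousOn {f : ℝ → ℂ} (hf : ContinuousOn f (Set.Icc (0:ℝ) 1)) : BM f :=
  ⟨hf.aestronglyMeasurable measurableSet_Icc, isCompact_Icc.exists_bound_of_continuousOn hf⟩

/-- Integrability from measurability and a bound on an open interval. -/
lemma aux_intervalIntegrable {f : ℝ → ℂ}
    (hf : AEStronglyMeasurable f (volume.restrict (Set.Icc (0:ℝ) 1))) {B b : ℝ}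
    (hb : b ∈ Set.Icc (0:ℝ) 1) (hB : ∀ t ∈ Set.Ioo 0 b, ‖f t‖ ≤ B) :
    IntervalIntegrable f volume 0 b := by
  rw [intervalIntegrable_iff_integrableOn_Ioo_of_le hb.1]
  refine Integrable.of_bound (C := B) ?_ ?_
  · have hsub : Set.Ioo 0 b ⊆ Set.Icc (0:ℝ) 1 := fun t ht => ⟨ht.1.le, ht.2.le.trans hb.2⟩
    exact hf.mono_measure (Measure.restrict_mono hsub le_rfl)
  · exact (ae_restrict_iff' measurableSet_Ioo).2 (Eventually.of_forall hB)

lemma BM.intervalIntegrable {f : ℝ → ℂ} (hf : BM f) {b : ℝ} (hb : b ∈ Set.Icc (0:ℝ) 1) :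
    IntervalIntegrable f volume 0 b := by
  obtain ⟨hf, B, hB⟩ := hf
  exact aux_intervalIntegrable hf hb (fun t ht => hB t ⟨ht.1.le, ht.2.le.trans hb.2⟩)

lemma aux_primitive {f : ℝ → ℂ} {b : ℝ} (hb : 0 ≤ b) (hf : IntervalIntegrable f volume 0 b) :
    ContinuousOn (fun t => ∫ τ in (0:ℝ)..t, f τ) (Set.Icc 0 b) := by
  have := intervalIntegral.continuousOn_primitive_interval' hf Set.left_mem_uIcc
  rwa [Set.uIcc_of_le hb] at this

lemma BM.primitive {f : ℝ → ℂ} (hf : BM f) : BM fun t => ∫ τ in (0:ℝ)..t, f τ :=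
  BM.of_continuousOn (aux_primitive zero_le_one
    (hf.intervalIntegrable (Set.right_mem_Icc.2 zero_le_one)))

lemma BM.sum {ι : Type*} (S : Finset ι) {f : ι → ℝ → ℂ} (hf : ∀ i, BM (f i)) :
    BM fun t => ∑ i ∈ S, f i t := by
  classical
  induction S using Finset.induction_on with
  | empty => simpa using BM.const 0
  | insert a S ha ih => simpa [Finset.sum_insert ha] using (hf a).add ih

/-! ### A priori bounds -/

lemma aux_weighted {ι : Type*} [Fintype ι] {A : ℝ → ι → ι → ℂ} {x : ℝ → ι → ℂ} {x0 : ι → ℂ}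
    {μ : ι → ℝ} (hμ : ∀ i, 0 < μ i) {L b : ℝ} (hL : 0 ≤ L) (hb : b ∈ Set.Icc (0:ℝ) 1)
    (hA : ∀ t ∈ Set.Icc (0:ℝ) 1, ∀ i k, ‖A t i k‖ * μ k ≤ L * μ i)
    (hx : ∀ i, ContinuousOn (fun t => x t i) (Set.Icc 0 b))
    (heq : ∀ t ∈ Set.Icc 0 b, ∀ i, x t i = x0 i + ∫ τ in (0:ℝ)..t, ∑ k, A τ i k * x τ k) :
    ∀ t ∈ Set.Icc 0 b, ∑ i, ‖x t i‖ / μ i ≤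
      (∑ i, ‖x0 i‖ / μ i) * Real.exp (Fintype.card ι * L * t) := by
  have hwc : ContinuousOn (fun t => ∑ i, ‖x t i‖ / μ i) (Set.Icc 0 b) :=
    continuousOn_finsetSum _ fun i _ => (hx i).norm.div_const _
  have hw0 : ∀ y : ι → ℂ, 0 ≤ ∑ i, ‖y i‖ / μ i := fun y =>
    Finset.sum_nonneg fun i _ => div_nonneg (norm_nonneg _) (hμ i).le
  refine aux_gronwall hb.1 (hw0 x0) (by positivity) hwc (fun t _ => hw0 _) ?_
  intro t ht
  have hsub : Set.Icc 0 t ⊆ Set.Icc 0 b := Set.Icc_subset_Icc_right ht.2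
  have hwi : IntervalIntegrable (fun t => ∑ i, ‖x t i‖ / μ i) volume 0 t :=
    (hwc.mono hsub).intervalIntegrable_of_Icc ht.1
  have key : ∀ i, ‖x t i‖ / μ i ≤ ‖x0 i‖ / μ i + L * ∫ τ in (0:ℝ)..t, ∑ i, ‖x τ i‖ / μ i := by
    intro i
    have h1 : ‖∫ τ in (0:ℝ)..t, ∑ k, A τ i k * x τ k‖ ≤
        ∫ τ in (0:ℝ)..t, (L * μ i) * ∑ i, ‖x τ i‖ / μ i := by
      refine intervalIntegral.norm_integral_le_of_norm_le ht.1 (Eventually.of_forall ?_)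
        (hwi.const_mul _)
      intro τ hτ
      rw [Finset.mul_sum]
      refine (norm_sum_le _ _).trans (Finset.sum_le_sum fun k _ => ?_)
      have h2 := hA τ ⟨hτ.1.le, hτ.2.trans (ht.2.trans hb.2)⟩ i k
      calc ‖A τ i k * x τ k‖ = (‖A τ i k‖ * μ k) * (‖x τ k‖ / μ k) := by
            rw [norm_mul]; have := (hμ k).ne'; field_simp
        _ ≤ _ := mul_le_mul_of_nonneg_right h2 (div_nonneg (norm_nonneg _) (hμ k).le)
    rw [intervalIntegral.integral_const_mul] at h1
    rw [div_le_iff₀ (hμ i), add_mul, div_mul_cancel₀ _ (hμ i).ne', heq t ht i]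
    refine (norm_add_le _ _).trans (add_le_add le_rfl (h1.trans (le_of_eq (by ring))))
  refine (Finset.sum_le_sum fun i _ => key i).trans (le_of_eq ?_)
  rw [Finset.sum_add_distrib, Finset.sum_const, Finset.card_univ, nsmul_eq_mul]
  ring

/-! ### Solutions of the integral equation are automatically continuous -/

lemma aux_continuous {ι : Type*} [Fintype ι] {A : ℝ → ι → ι → ℂ} {x : ℝ → ι → ℂ} {x0 : ι → ℂ}
    (hA : ∀ i k, BM fun t => A t i k)
    (heq : ∀ t ∈ Set.Icc (0:ℝ) 1, ∀ i,
      x t i = x0 i + ∫ τ in (0:ℝ)..t, ∑ k, A τ i k * x τ k) :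
    ∀ i, ContinuousOn (fun t => x t i) (Set.Icc (0:ℝ) 1) := by
  -- a uniform bound for `A`
  obtain ⟨L, hL0, hL⟩ : ∃ L : ℝ, 0 ≤ L ∧ ∀ t ∈ Set.Icc (0:ℝ) 1, ∀ i k, ‖A t i k‖ ≤ L := by
    choose B hB using fun i k => (hA i k).2
    have hB0 : ∀ i k, 0 ≤ B i k := fun i k =>
      (norm_nonneg _).trans (hB i k 0 (Set.left_mem_Icc.2 zero_le_one))
    refine ⟨∑ i, ∑ k, B i k, Finset.sum_nonneg fun i _ => Finset.sum_nonneg fun k _ => hB0 i k,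
      fun t ht i k => (hB i k t ht).trans ?_⟩
    exact (Finset.single_le_sum (f := fun k => B i k) (fun k _ => hB0 i k)
      (Finset.mem_univ k)).trans (Finset.single_le_sum (f := fun i => ∑ k, B i k)
        (fun i _ => Finset.sum_nonneg fun k _ => hB0 i k) (Finset.mem_univ i))
  set F : ι → ℝ → ℂ := fun i τ => ∑ k, A τ i k * x τ k with hF
  let I : ι → Set ℝ := fun i => {t | t ∈ Set.Icc (0:ℝ) 1 ∧ IntervalIntegrable (F i) volume 0 t}
  have hdown : ∀ i, ∀ t ∈ I i, ∀ r, 0 ≤ r → r ≤ t → r ∈ I i := by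
    intro i t ht r hr hrt
    refine ⟨⟨hr, hrt.trans ht.1.2⟩, ht.2.mono_set ?_⟩
    rw [Set.uIcc_of_le hr, Set.uIcc_of_le (hr.trans hrt)]
    exact Set.Icc_subset_Icc_right hrt
  have hcI : ∀ i, ∀ t ∈ I i, ContinuousOn (fun t => x t i) (Set.Icc 0 t) := by
    intro i t ht
    refine ContinuousOn.congr ((continuousOn_const (c := x0 i)).add (aux_primitive ht.1.1 ht.2)) ?_
    intro r hr
    exact heq r ⟨hr.1, hr.2.trans ht.1.2⟩ i
  have hconst : ∀ i, ∀ t ∈ Set.Icc (0:ℝ) 1, t ∉ I i → x t i = x0 i := by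
    intro i t ht hn
    have : ¬ IntervalIntegrable (F i) volume 0 t := fun h => hn ⟨ht, h⟩
    rw [heq t ht i, intervalIntegral.integral_undef this, add_zero]
  have hcI' : ∀ i, ContinuousOn (fun t => x t i) (I i) := by
    intro i t ht
    by_cases hex : ∃ t1 ∈ I i, t < t1
    · obtain ⟨t1, ht1, hlt⟩ := hex
      refine (hcI i t1 ht1 t ⟨ht.1.1, hlt.le⟩).mono_of_mem_nhdsWithin ?_
      filter_upwards [self_mem_nhdsWithin, mem_nhdsWithin_of_mem_nhds (Iio_mem_nhds hlt)]
        with r hr hr'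
      exact ⟨hr.1.1, le_of_lt hr'⟩
    · push Not at hex
      exact (hcI i t ht t ⟨ht.1.1, le_rfl⟩).mono fun r hr => ⟨hr.1.1, hex r hr⟩
  have hmeas : ∀ i, AEStronglyMeasurable (fun t => x t i) (volume.restrict (Set.Icc (0:ℝ) 1)) := by
    intro i
    have hord : (I i).OrdConnected :=
      ⟨fun a ha b hb r hr => hdown i b hb r (ha.1.1.trans hr.1) hr.2⟩
    have hIm : MeasurableSet (I i) := hord.measurableSet
    have hsub : I i ⊆ Set.Icc 0 1 := fun t ht => ht.1
    have : Set.Icc (0:ℝ) 1 = I i ∪ (Set.Icc 0 1 \ I i) := (Set.union_sdiff_cancel hsub).symm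
    rw [this, aestronglyMeasurable_union_iff]
    refine ⟨(hcI' i).aestronglyMeasurable hIm, ?_⟩
    have hc : ContinuousOn (fun t => x t i) (Set.Icc 0 1 \ I i) :=
      continuousOn_const.congr fun t ht => hconst i t ht.1 ht.2
    exact hc.aestronglyMeasurable (measurableSet_Icc.diff hIm)
  have hFmeas : ∀ i, AEStronglyMeasurable (F i) (volume.restrict (Set.Icc (0:ℝ) 1)) := by
    intro i
    exact Finset.aestronglyMeasurable_fun_sum _ fun k _ => (hA i k).1.mul (hmeas k)
  -- boundedness gives integrability
  have hbdd : ∀ b ∈ Set.Icc (0:ℝ) 1, ∀ B : ℝ, (∀ t ∈ Set.Ioo 0 b, ∀ i, ‖x t i‖ ≤ B) →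
      ∀ i, b ∈ I i := by
    intro b hb B hB i
    refine ⟨hb, aux_intervalIntegrable (B := ∑ _k : ι, L * B) (hFmeas i) hb fun t ht => ?_⟩
    refine (norm_sum_le _ _).trans (Finset.sum_le_sum fun k _ => ?_)
    rw [norm_mul]
    exact mul_le_mul (hL t ⟨ht.1.le, ht.2.le.trans hb.2⟩ i k) (hB t ht k) (norm_nonneg _) hL0
  let S : Set ℝ := {t | ∀ i, t ∈ I i}
  -- a uniform a priori bound on `S`
  obtain ⟨B, hB⟩ : ∃ B : ℝ, ∀ t ∈ Set.Icc (0:ℝ) 1, t ∈ S → ∀ i, ‖x t i‖ ≤ B := by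
    refine ⟨(∑ i, ‖x0 i‖) * Real.exp (Fintype.card ι * L), fun t ht hS i => ?_⟩
    have h1 := aux_weighted (A := A) (x := x) (x0 := x0) (μ := fun _ => 1) (fun _ => one_pos)
      hL0 ht (by simpa using hL) (fun i => hcI i t (hS i))
      (fun r hr i => heq r ⟨hr.1, hr.2.trans ht.2⟩ i) t ⟨ht.1, le_rfl⟩
    simp only [div_one] at h1
    refine ((Finset.single_le_sum (f := fun i => ‖x t i‖) (fun i _ => norm_nonneg _)
      (Finset.mem_univ i)).trans h1).trans ?_
    refine mul_le_mul_of_nonneg_left (Real.exp_le_exp.2 ?_)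
      (Finset.sum_nonneg fun i _ => norm_nonneg _)
    exact mul_le_of_le_one_right (by positivity) ht.2
  have h0S : (0:ℝ) ∈ S := fun i => ⟨Set.left_mem_Icc.2 zero_le_one, by simp⟩
  let S' : Set ℝ := S ∩ Set.Icc 0 1
  have hS'ne : S'.Nonempty := ⟨0, h0S, Set.left_mem_Icc.2 zero_le_one⟩
  have hS'bd : BddAbove S' := ⟨1, fun t ht => ht.2.2⟩
  set T := sSup S' with hT
  have hT01 : T ∈ Set.Icc (0:ℝ) 1 :=
    ⟨le_csSup hS'bd ⟨h0S, Set.left_mem_Icc.2 zero_le_one⟩, csSup_le hS'ne fun t ht => ht.2.2⟩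
  have hltT : ∀ t, 0 ≤ t → t < T → t ∈ S := by
    intro t ht0 ht
    obtain ⟨r, hr, htr⟩ := exists_lt_of_lt_csSup hS'ne ht
    exact fun i => hdown i r (hr.1 i) t ht0 htr.le
  have hTS : T ∈ S := hbdd T hT01 B fun t ht =>
    hB t ⟨ht.1.le, ht.2.le.trans hT01.2⟩ (hltT t ht.1.le ht.2)
  have hT1 : T = 1 := by
    by_contra hne
    have hlt : T < 1 := lt_of_le_of_ne hT01.2 hne
    have hIoo : Set.Ioo T 1 ∈ 𝓝[>] T := Ioo_mem_nhdsGT hlt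
    have hlim : ∀ i, ∃ l : ℂ, Tendsto (fun t => x t i) (𝓝[>] T) (𝓝 l) := by
      intro i
      by_cases hex : ∃ t1 ∈ I i, T < t1
      · obtain ⟨t1, ht1, hlt1⟩ := hex
        refine ⟨x T i, ?_⟩
        refine (hcI i t1 ht1 T ⟨hT01.1, hlt1.le⟩).mono_of_mem_nhdsWithin ?_
        exact mem_of_superset (Ioo_mem_nhdsGT hlt1) fun r hr => ⟨hT01.1.trans hr.1.le, hr.2.le⟩
      · push Not at hex
        refine ⟨x0 i, tendsto_const_nhds.congr' ?_⟩
        filter_upwards [hIoo] with r hr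
        exact (hconst i r ⟨hT01.1.trans hr.1.le, hr.2.le⟩
          fun h => absurd (hex r h) (not_le.2 hr.1)).symm
    choose l hl using hlim
    have hev : ∀ᶠ t in 𝓝[>] T, ∀ i, ‖x t i‖ ≤ ‖l i‖ + 1 :=
      eventually_all.2 fun i => ((hl i).norm.eventually (gt_mem_nhds (lt_add_one _))).mono
        fun t ht => le_of_lt ht
    obtain ⟨u, hu, hsub⟩ := (mem_nhdsGT_iff_exists_Ioo_subset' hlt).1 (inter_mem hev hIoo)
    have hTu : T < u := hu
    obtain ⟨v, hv1, hv2⟩ := exists_between hTu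
    have hv01 : v ∈ Set.Icc (0:ℝ) 1 :=
      ⟨hT01.1.trans hv1.le, (hsub ⟨hv1, hv2⟩).2.2.le⟩
    have hvS : v ∈ S := by
      refine hbdd v hv01 (max B (∑ i, (‖l i‖ + 1))) fun t ht i => ?_
      rcases le_or_gt t T with h | h
      · refine (hB t ⟨ht.1.le, ht.2.le.trans hv01.2⟩ ?_ i).trans (le_max_left _ _)
        exact fun i => hdown i T (hTS i) t ht.1.le h
      · refine ((hsub ⟨h, ht.2.trans hv2⟩).1 i).trans (le_trans ?_ (le_max_right _ _))
        exact Finset.single_le_sum (f := fun i => ‖l i‖ + 1) (fun i _ => by positivity)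
          (Finset.mem_univ i)
    exact absurd (le_csSup hS'bd ⟨hvS, hv01⟩) (not_le.2 hv1)
  intro i
  have := hcI i T (hTS i)
  rwa [hT1] at this

/-! ### Polynomials in `s` with bounded measurable coefficients -/

/-- Finite sums of `s ^ k * c t`, with `c` bounded and measurable on `[0,1]`. -/
inductive Good : (ℂ → ℝ → ℂ) → Prop
  | mono (k : ℕ) (c : ℝ → ℂ) (hc : BM c) : Good fun s t => s ^ k * c t
  | add (f g : ℂ → ℝ → ℂ) (hf : Good f) (hg : Good g) : Good fun s t => f s t + g s t

lemma Good.bm {f : ℂ → ℝ → ℂ} (hf : Good f) (s : ℂ) : BM (f s) := by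
  induction hf with
  | mono k c hc => exact (BM.const _).mul hc
  | add f g _ _ ihf ihg => exact ihf.add ihg

lemma Good.differentiable {f : ℂ → ℝ → ℂ} (hf : Good f) (t : ℝ) :
    Differentiable ℂ fun s => f s t := by
  induction hf with
  | mono k c hc => fun_prop
  | add f g _ _ ihf ihg => exact ihf.add ihg

lemma Good.const (z : ℂ) : Good fun _ _ => z := by
  simpa using Good.mono 0 _ (BM.const z)

lemma Good.sum {ι : Type*} (S : Finset ι) {f : ι → ℂ → ℝ → ℂ} (hf : ∀ i, Good (f i)) :
    Good fun s t => ∑ i ∈ S, f i s t := by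
  classical
  induction S using Finset.induction_on with
  | empty => simpa using Good.const 0
  | insert a S ha ih => simpa [Finset.sum_insert ha] using Good.add _ _ (hf a) ih

lemma Good.mul {f g : ℂ → ℝ → ℂ} (hf : Good f) (hg : Good g) : Good fun s t => f s t * g s t := by
  induction hf with
  | mono k c hc =>
    induction hg with
    | mono l e he =>
      have := Good.mono (k + l) _ (hc.mul he)
      convert this using 3
      ring
    | add f g _ _ ihf ihg =>
      have := Good.add _ _ ihf ihg
      convert this using 3
      ring
  | add f f' _ _ ihf ihf' =>
    have := Good.add _ _ ihf ihf'
    convert this using 3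
    ring

/-- Primitives agree on `[0,1]` with good functions. -/
lemma Good.primitive {f : ℂ → ℝ → ℂ} (hf : Good f) :
    ∃ g, Good g ∧ ∀ s, ∀ t ∈ Set.Icc (0:ℝ) 1, g s t = ∫ τ in (0:ℝ)..t, f s τ := by
  induction hf with
  | mono k c hc =>
    refine ⟨_, Good.mono k _ hc.primitive, fun s t _ => ?_⟩
    rw [intervalIntegral.integral_const_mul]
  | add f g hf hg ihf ihg =>
    obtain ⟨f', hf', hff⟩ := ihf
    obtain ⟨g', hg', hgg⟩ := ihg
    refine ⟨_, Good.add _ _ hf' hg', fun s t ht => ?_⟩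
    rw [intervalIntegral.integral_add ((hf.bm s).intervalIntegrable ht)
      ((hg.bm s).intervalIntegrable ht), hff s t ht, hgg s t ht]

/-! ### Picard iteration -/

lemma aux_picard_exists {ι : Type*} [Fintype ι] {A : ℂ → ℝ → ι → ι → ℂ} (x0 : ι → ℂ)
    (hA : ∀ i k, Good fun s t => A s t i k) :
    ∃ P : ℕ → ι → ℂ → ℝ → ℂ, (∀ n i, Good (P n i)) ∧ (∀ i s t, P 0 i s t = 0) ∧
      ∀ n i s, ∀ t ∈ Set.Icc (0:ℝ) 1,
        P (n + 1) i s t = x0 i + ∫ τ in (0:ℝ)..t, ∑ k, A s τ i k * P n k s τ := by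
  have step : ∀ p : {p : ι → ℂ → ℝ → ℂ // ∀ i, Good (p i)},
      ∃ q : {p : ι → ℂ → ℝ → ℂ // ∀ i, Good (p i)}, ∀ i s, ∀ t ∈ Set.Icc (0:ℝ) 1,
        q.1 i s t = x0 i + ∫ τ in (0:ℝ)..t, ∑ k, A s τ i k * p.1 k s τ := by
    rintro ⟨p, hp⟩
    have : ∀ i, Good fun s t => ∑ k, A s t i k * p k s t := fun i =>
      Good.sum _ fun k => (hA i k).mul (hp k)
    choose g hg hgg using fun i => (this i).primitive
    refine ⟨⟨fun i s t => x0 i + g i s t, fun i => Good.add _ _ (Good.const _) (hg i)⟩, ?_⟩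
    intro i s t ht
    simp only [hgg i s t ht]
  choose q hq using step
  let P : ℕ → {p : ι → ℂ → ℝ → ℂ // ∀ i, Good (p i)} := fun n =>
    Nat.rec ⟨fun _ _ _ => 0, fun _ => Good.const 0⟩ (fun _ p => q p) n
  exact ⟨fun n => (P n).1, fun n => (P n).2, fun _ _ _ => rfl, fun n => hq (P n)⟩

lemma aux_picard_bound {ι : Type*} [Fintype ι] {A : ℝ → ι → ι → ℂ} {x : ℝ → ι → ℂ} {x0 : ι → ℂ}
    {P : ℕ → ι → ℝ → ℂ} {L M : ℝ} (hL0 : 0 ≤ L)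
    (hAm : ∀ i k, BM fun t => A t i k)
    (hA : ∀ t ∈ Set.Icc (0:ℝ) 1, ∀ i k, ‖A t i k‖ ≤ L)
    (hxc : ∀ i, ContinuousOn (fun t => x t i) (Set.Icc (0:ℝ) 1))
    (hxM : ∀ t ∈ Set.Icc (0:ℝ) 1, ∀ i, ‖x t i‖ ≤ M)
    (heq : ∀ t ∈ Set.Icc (0:ℝ) 1, ∀ i,
      x t i = x0 i + ∫ τ in (0:ℝ)..t, ∑ k, A τ i k * x τ k)
    (hP : ∀ n i, BM (P n i)) (hP0 : ∀ i t, P 0 i t = 0)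
    (hPs : ∀ n i, ∀ t ∈ Set.Icc (0:ℝ) 1,
        P (n + 1) i t = x0 i + ∫ τ in (0:ℝ)..t, ∑ k, A τ i k * P n k τ) (n : ℕ) :
    ∀ t ∈ Set.Icc (0:ℝ) 1, ∀ i,
      ‖x t i - P n i t‖ ≤ M * ((Fintype.card ι * L) ^ n / n.factorial * t ^ n) := by
  induction n with
  | zero => intro t ht i; simpa [hP0] using hxM t ht i
  | succ n ih =>
    intro t ht i
    have i1 : IntervalIntegrable (fun τ => ∑ k, A τ i k * x τ k) volume 0 t :=
      (BM.sum _ fun k => (hAm i k).mul (BM.of_continuousOn (hxc k))).intervalIntegrable ht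
    have i2 : IntervalIntegrable (fun τ => ∑ k, A τ i k * P n k τ) volume 0 t :=
      (BM.sum _ fun k => (hAm i k).mul (hP n k)).intervalIntegrable ht
    rw [heq t ht i, hPs n i t ht, add_sub_add_left_eq_sub, ← intervalIntegral.integral_sub i1 i2]
    have h1 : ‖∫ τ in (0:ℝ)..t, (∑ k, A τ i k * x τ k - ∑ k, A τ i k * P n k τ)‖ ≤
        ∫ τ in (0:ℝ)..t, (Fintype.card ι * L * (M * ((Fintype.card ι * L) ^ n / n.factorial)))
          * τ ^ n := by
      refine intervalIntegral.norm_integral_le_of_norm_le ht.1 (Eventually.of_forall ?_)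
        (Continuous.intervalIntegrable (by fun_prop) _ _)
      intro τ hτ
      have hτ' : τ ∈ Set.Icc (0:ℝ) 1 := ⟨hτ.1.le, hτ.2.trans ht.2⟩
      rw [← Finset.sum_sub_distrib]
      refine (norm_sum_le _ _).trans ((Finset.sum_le_sum
        (g := fun _ => L * (M * ((Fintype.card ι * L) ^ n / n.factorial * τ ^ n)))
        fun k _ => ?_).trans (le_of_eq ?_))
      · rw [← mul_sub, norm_mul]
        exact mul_le_mul (hA τ hτ' i k) (ih τ hτ' k) (norm_nonneg _) hL0
      · rw [Finset.sum_const, Finset.card_univ, nsmul_eq_mul]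
        ring
    refine h1.trans (le_of_eq ?_)
    rw [intervalIntegral.integral_const_mul, integral_pow, Nat.factorial_succ]
    have : (n.factorial : ℝ) ≠ 0 := by positivity
    push_cast
    field_simp
    simp
    ring

/-! ### The coefficient matrix -/

/-- Weights adapted to the block structure. -/
def wt (d : ℕ) (s : ℂ) (i : Fin (d + d)) : ℝ := if (i : ℕ) < d then 1 + ‖s‖ else 1

lemma wt_one_le (d : ℕ) (s : ℂ) (i : Fin (d + d)) : 1 ≤ wt d s i := by
  unfold wt; split_ifs <;> simp

lemma wt_le (d : ℕ) (s : ℂ) (i : Fin (d + d)) : wt d s i ≤ 1 + ‖s‖ := by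
  unfold wt; split_ifs <;> simp

lemma Jc_weight (d : ℕ) (s : ℂ) (l k : Fin (d + d)) :
    wt d s l * ‖Jc d l k‖ * wt d s k ≤ 1 + ‖s‖ := by
  obtain ⟨l, rfl⟩ := finSumFinEquiv.surjective l
  obtain ⟨k, rfl⟩ := finSumFinEquiv.surjective k
  have hs := norm_nonneg s
  have h1 : ∀ a b : Fin d, ‖(1 : Matrix (Fin d) (Fin d) ℂ) a b‖ ≤ 1 := by
    intro a b
    rw [Matrix.one_apply]; split_ifs <;> simp
  have hp : 0 ≤ 1 + ‖s‖ := by positivity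
  rcases l with l | l <;> rcases k with k | k <;>
    simp only [Jc, Matrix.reindex_apply, Matrix.submatrix_apply, Equiv.symm_apply_apply,
      Matrix.fromBlocks_apply₁₁, Matrix.fromBlocks_apply₁₂, Matrix.fromBlocks_apply₂₁,
      Matrix.fromBlocks_apply₂₂, Matrix.zero_apply, norm_zero,
      Matrix.neg_apply, norm_neg, mul_zero, zero_mul] <;>
    try simp only [wt, finSumFinEquiv_apply_left, finSumFinEquiv_apply_right,
      Fin.val_castAdd, Fin.val_natAdd, Fin.is_lt, if_true, add_lt_iff_neg_left, not_lt_zero,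
      if_false] <;> have := h1 l k <;> nlinarith
  exacts [hp, hp]

lemma Zs_bound {d m : ℕ} {Z : ℝ → Matrix (Fin (d + d)) (Fin m) ℝ} {C : ℝ}
    (hC : ∀ t ∈ Set.Icc (0:ℝ) 1, ∀ i j, |Z t i j| ≤ C) (s : ℂ) {t : ℝ}
    (ht : t ∈ Set.Icc (0:ℝ) 1) (i : Fin (d + d)) (j : Fin m) :
    ‖Zs Z s t i j‖ ≤ C * wt d s i := by
  have h := hC t ht i j
  have h0 := abs_nonneg (Z t i j)
  have hs := norm_nonneg s
  simp only [Zs, wt, Matrix.of_apply, norm_mul, Complex.norm_real, Real.norm_eq_abs]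
  split_ifs
  · nlinarith
  · simpa using h

lemma coeff_bound {d m : ℕ} {Z : ℝ → Matrix (Fin (d + d)) (Fin m) ℝ} {C : ℝ} (hC0 : 0 ≤ C)
    (hC : ∀ t ∈ Set.Icc (0:ℝ) 1, ∀ i j, |Z t i j| ≤ C) (s : ℂ) {t : ℝ}
    (ht : t ∈ Set.Icc (0:ℝ) 1) (i k : Fin (d + d)) :
    ‖(Zs Z s t * (Zs Z s t)ᵀ * Jc d) i k‖ * wt d s k ≤
      ((d + d : ℕ) * m * C ^ 2 * (1 + ‖s‖)) * wt d s i := by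
  have hw : ∀ i, 0 ≤ wt d s i := fun i => zero_le_one.trans (wt_one_le d s i)
  have h1 : ∀ l, ‖(Zs Z s t * (Zs Z s t)ᵀ) i l‖ ≤ m * C ^ 2 * wt d s i * wt d s l := by
    intro l
    rw [Matrix.mul_apply]
    refine (norm_sum_le _ _).trans ((Finset.sum_le_sum
      (g := fun _ => (C * wt d s i) * (C * wt d s l)) fun r _ => ?_).trans (le_of_eq ?_))
    · rw [norm_mul, Matrix.transpose_apply]
      exact mul_le_mul (Zs_bound hC s ht i r) (Zs_bound hC s ht l r) (norm_nonneg _)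
        (mul_nonneg hC0 (hw i))
    · rw [Finset.sum_const, Finset.card_univ, nsmul_eq_mul, Fintype.card_fin]
      ring
  rw [Matrix.mul_apply]
  refine (mul_le_mul_of_nonneg_right (norm_sum_le _ _) (hw k)).trans ?_
  rw [Finset.sum_mul]
  refine (Finset.sum_le_sum
      (g := fun _ => m * C ^ 2 * wt d s i * (1 + ‖s‖)) fun l _ => ?_).trans (le_of_eq ?_)
  · rw [norm_mul]
    calc _ ≤ m * C ^ 2 * wt d s i * wt d s l * ‖Jc d l k‖ * wt d s k :=
          mul_le_mul_of_nonneg_right (mul_le_mul_of_nonneg_right (h1 l) (norm_nonneg _)) (hw k)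
      _ = m * C ^ 2 * wt d s i * (wt d s l * ‖Jc d l k‖ * wt d s k) := by ring
      _ ≤ _ := mul_le_mul_of_nonneg_left (Jc_weight d s l k)
          (mul_nonneg (by positivity) (hw i))
  · rw [Finset.sum_const, Finset.card_univ, nsmul_eq_mul, Fintype.card_fin]
    ring

lemma coeff_good {d m : ℕ} {Z : ℝ → Matrix (Fin (d + d)) (Fin m) ℝ}
    (hZmeas : ∀ i j, Measurable fun t => Z t i j) {C : ℝ}
    (hC : ∀ t ∈ Set.Icc (0:ℝ) 1, ∀ i j, |Z t i j| ≤ C) (i k : Fin (d + d)) :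
    Good fun s t => (Zs Z s t * (Zs Z s t)ᵀ * Jc d) i k := by
  have hZ : ∀ i j, Good fun s t => Zs Z s t i j := by
    intro i j
    have hb : BM fun t => (Z t i j : ℂ) :=
      ⟨(Complex.measurable_ofReal.comp (hZmeas i j)).aestronglyMeasurable, C, fun t ht => by
        simpa using hC t ht i j⟩
    by_cases h : (i : ℕ) < d
    · simpa [Zs, h] using Good.mono 1 _ hb
    · simpa [Zs, h] using Good.mono 0 _ hb
  simp only [Matrix.mul_apply, Matrix.transpose_apply]
  exact Good.sum _ fun l => (Good.sum _ fun r => (hZ i r).mul (hZ l r)).mul (Good.const _)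

/-- **Proposition 4.**  The fundamental matrix `Φ¹ₛ` of the complexified Jacobi
equation `Φ̇ = Z_tˢ (Z_tˢ)ᵀ J Φ`, `Φ⁰ₛ = I` (understood as a Carathéodory solution,
i.e. through the integral equation) is an entire function of `s` and satisfies
`‖Φ¹ₛ‖ ≤ c e^{c|s|}`. -/
theorem fundamental_matrix_entire_and_exponential_bound
    (d m : ℕ) (hd : 0 < d) (hm : 0 < m)
    (Z : ℝ → Matrix (Fin (d + d)) (Fin m) ℝ)
    (hZmeas : ∀ i j, Measurable fun t => Z t i j)
    (hZbdd : ∃ C : ℝ, ∀ t ∈ Set.Icc (0:ℝ) 1, ∀ i j, |Z t i j| ≤ C)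
    (Φ : ℂ → ℝ → Matrix (Fin (d + d)) (Fin (d + d)) ℂ)
    (hΦ0 : ∀ s : ℂ, Φ s 0 = 1)
    (hΦ : ∀ (s : ℂ), ∀ t ∈ Set.Icc (0:ℝ) 1, ∀ i j,
      Φ s t i j = (1 : Matrix (Fin (d + d)) (Fin (d + d)) ℂ) i j +
        ∫ τ in (0:ℝ)..t, ((Zs Z s τ * (Zs Z s τ)ᵀ * Jc d) * Φ s τ) i j) :
    (∀ i j, Differentiable ℂ (fun s : ℂ => Φ s 1 i j)) ∧
    ∃ c : ℝ, 0 < c ∧ ∀ s : ℂ, ‖Φ s 1‖ ≤ c * Real.exp (c * ‖s‖) := by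
  obtain ⟨C, hC⟩ := hZbdd
  have hC0 : 0 ≤ C := (abs_nonneg _).trans
    (hC 0 (Set.left_mem_Icc.2 zero_le_one) ⟨0, by omega⟩ ⟨0, hm⟩)
  set A : ℂ → ℝ → Fin (d + d) → Fin (d + d) → ℂ :=
    fun s t i k => (Zs Z s t * (Zs Z s t)ᵀ * Jc d) i k with hAdef
  have hAg : ∀ i k, Good fun s t => A s t i k := fun i k => coeff_good hZmeas hC i k
  have heq : ∀ (s : ℂ) (j : Fin (d + d)), ∀ t ∈ Set.Icc (0:ℝ) 1, ∀ i, Φ s t i j =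
      (1 : Matrix (Fin (d + d)) (Fin (d + d)) ℂ) i j +
        ∫ τ in (0:ℝ)..t, ∑ k, A s τ i k * Φ s τ k j := by
    intro s j t ht i
    rw [hΦ s t ht i j]
    simp only [Matrix.mul_apply (N := Φ s _), hAdef]
  have hcont : ∀ s j i, ContinuousOn (fun t => Φ s t i j) (Set.Icc (0:ℝ) 1) := fun s j =>
    aux_continuous (A := A s) (x := fun t i => Φ s t i j) (fun i k => (hAg i k).bm s) (heq s j)
  set K : ℝ := (d + d : ℕ) * ((d + d : ℕ) * m * C ^ 2) with hK
  have hK0 : 0 ≤ K := by positivity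
  have hwp : ∀ s i, 0 < wt d s i := fun s i => zero_lt_one.trans_le (wt_one_le d s i)
  have hbound : ∀ (s : ℂ) (j i : Fin (d + d)), ∀ t ∈ Set.Icc (0:ℝ) 1,
      ‖Φ s t i j‖ ≤ (1 + ‖s‖) * Real.exp (K * (1 + ‖s‖)) := by
    intro s j i t ht
    have h1 := aux_weighted (A := A s) (x := fun t i => Φ s t i j)
      (x0 := fun i => (1 : Matrix (Fin (d + d)) (Fin (d + d)) ℂ) i j) (μ := wt d s) (hwp s)
      (L := (d + d : ℕ) * m * C ^ 2 * (1 + ‖s‖)) (by positivity)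
      (Set.right_mem_Icc.2 zero_le_one) (fun t ht i k => coeff_bound hC0 hC s ht i k)
      (hcont s j) (heq s j) t ht
    have h2 : ∑ i, ‖(1 : Matrix (Fin (d + d)) (Fin (d + d)) ℂ) i j‖ / wt d s i ≤ 1 := by
      rw [Finset.sum_eq_single j]
      · simpa using inv_le_one_of_one_le₀ (wt_one_le d s j)
      · intro b _ hb; simp [Matrix.one_apply_ne hb]
      · simp
    have h3 : ‖Φ s t i j‖ / wt d s i ≤ ∑ i, ‖Φ s t i j‖ / wt d s i :=
      Finset.single_le_sum (f := fun i => ‖Φ s t i j‖ / wt d s i)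
        (fun i _ => div_nonneg (norm_nonneg _) (hwp s i).le) (Finset.mem_univ i)
    have h4 : Real.exp (Fintype.card (Fin (d + d)) *
        ((d + d : ℕ) * m * C ^ 2 * (1 + ‖s‖)) * t) ≤ Real.exp (K * (1 + ‖s‖)) := by
      refine Real.exp_le_exp.2 ?_
      rw [Fintype.card_fin, ← mul_assoc, ← hK]
      exact mul_le_of_le_one_right (by positivity) ht.2
    have h5 : ‖Φ s t i j‖ / wt d s i ≤ Real.exp (K * (1 + ‖s‖)) :=
      (h3.trans h1).trans ((mul_le_mul h2 h4 (Real.exp_pos _).le zero_le_one).trans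
        (le_of_eq (one_mul _)))
    rw [div_le_iff₀ (hwp s i), mul_comm] at h5
    exact h5.trans (mul_le_mul_of_nonneg_right (wt_le d s i) (Real.exp_pos _).le)
  have h1mem : (1:ℝ) ∈ Set.Icc (0:ℝ) 1 := Set.right_mem_Icc.2 zero_le_one
  constructor
  · intro i j
    obtain ⟨P, hPg, hP0, hPs⟩ := aux_picard_exists
      (fun i => (1 : Matrix (Fin (d + d)) (Fin (d + d)) ℂ) i j) hAg
    have hunif : ∀ R : ℝ, 0 ≤ R → TendstoUniformlyOn (fun n s => P n i s 1) (fun s => Φ s 1 i j)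
        atTop (Metric.ball (0:ℂ) R) := by
      intro R hR
      set M : ℝ := (1 + R) * Real.exp (K * (1 + R)) with hM
      set L : ℝ := (d + d : ℕ) * m * C ^ 2 * (1 + R) * (1 + R) with hL
      have hL0 : 0 ≤ L := by positivity
      have hest : ∀ n : ℕ, ∀ s ∈ Metric.ball (0:ℂ) R, ‖Φ s 1 i j - P n i s 1‖ ≤
          M * ((Fintype.card (Fin (d + d)) * L) ^ n / n.factorial) := by
        intro n s hs
        have hsR : ‖s‖ ≤ R := (mem_ball_zero_iff.1 hs).le
        have := aux_picard_bound (A := A s) (x := fun t i => Φ s t i j)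
          (x0 := fun i => (1 : Matrix (Fin (d + d)) (Fin (d + d)) ℂ) i j)
          (P := fun n i t => P n i s t) (M := M) hL0 (fun i k => (hAg i k).bm s) ?_
          (hcont s j) ?_ (heq s j) (fun n i => (hPg n i).bm s) (fun i t => hP0 i s t)
          (fun n i t ht => hPs n i s t ht) n 1 h1mem i
        · simpa using this
        · intro t ht i k
          have hb := coeff_bound hC0 hC s ht i k
          have hle : ‖A s t i k‖ ≤ ‖A s t i k‖ * wt d s k :=
            le_mul_of_one_le_right (norm_nonneg _) (wt_one_le d s k)
          refine (hle.trans hb).trans ?_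
          have hwi : wt d s i ≤ 1 + R := (wt_le d s i).trans (by linarith)
          have hwi0 := (hwp s i).le
          rw [hL]
          gcongr
        · intro t ht k
          refine (hbound s j k t ht).trans ?_
          rw [hM]
          gcongr
      rw [Metric.tendstoUniformlyOn_iff]
      intro ε hε
      have hlim : Tendsto (fun n : ℕ => M * ((Fintype.card (Fin (d + d)) * L) ^ n / n.factorial))
          atTop (𝓝 0) := by
        simpa using (FloorSemiring.tendsto_pow_div_factorial_atTop
          (Fintype.card (Fin (d + d)) * L)).const_mul M
      filter_upwards [hlim.eventually (gt_mem_nhds hε)] with n hn s hs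
      rw [dist_eq_norm]
      exact (hest n s hs).trans_lt hn
    intro s0
    have hd1 : DifferentiableOn ℂ (fun s => Φ s 1 i j) (Metric.ball (0:ℂ) (‖s0‖ + 1)) :=
      (hunif _ (by positivity)).tendstoLocallyUniformlyOn.differentiableOn
        (Eventually.of_forall fun n => ((hPg n i).differentiable 1).differentiableOn)
        Metric.isOpen_ball
    exact hd1.differentiableAt (Metric.isOpen_ball.mem_nhds (by simp))
  · refine ⟨Real.exp K + K + 1, by positivity, fun s => ?_⟩
    have hs := norm_nonneg s
    rw [Matrix.norm_le_iff (by positivity)]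
    intro i j
    refine (hbound s j i 1 h1mem).trans ?_
    calc (1 + ‖s‖) * Real.exp (K * (1 + ‖s‖))
        ≤ Real.exp ‖s‖ * Real.exp (K * (1 + ‖s‖)) := by
          refine mul_le_mul_of_nonneg_right ?_ (Real.exp_pos _).le
          linarith [Real.add_one_le_exp ‖s‖]
      _ = Real.exp K * Real.exp ((K + 1) * ‖s‖) := by
          rw [← Real.exp_add, ← Real.exp_add]; ring_nf
      _ ≤ (Real.exp K + K + 1) * Real.exp ((Real.exp K + K + 1) * ‖s‖) := by
          have := Real.exp_pos K
          gcongr <;> linarith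

end
end

section
/- Let t ↦ Z_t be a bounded measurable family of 2d×m real matrices on [0,1] with Γ₁ = ∫₀¹ X_t X_tᵀ dt invertible. Then every complex root of the equation det Q₁ˢ = 0, s ∈ ℂ, is real. -/
open MeasureTheory Filter Topology Matrix

noncomputable section

/-- The bottom `d × m` block `X_t` of the block matrix `Z_t = (Y_t; X_t)`. -/
def Xblock {d m : ℕ} (Z : ℝ → Matrix (Fin (d + d)) (Fin m) ℝ) (t : ℝ) :
    Matrix (Fin d) (Fin m) ℝ :=
  Matrix.of fun i j => Z t (finSumFinEquiv (Sum.inr i)) j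

/-- Carathéodory solution of the complexified Jacobi equation
`η̇ = Z_tˢ (Z_tˢ)ᵀ J η`, via the equivalent integral equation. -/
def IsJacobiSolutionC {d m : ℕ} (Z : ℝ → Matrix (Fin (d + d)) (Fin m) ℝ) (s : ℂ)
    (η : ℝ → Fin (d + d) → ℂ) : Prop :=
  ∀ t ∈ Set.Icc (0:ℝ) 1,
    η t = η 0 + ∫ τ in (0:ℝ)..t, (Zs Z s τ * (Zs Z s τ)ᵀ * Jc d).mulVec (η τ)

/-- Entrywise integral of a matrix-valued function over a subset of `ℝ`. -/
def mSetIntegral {n p : Type*} (s : Set ℝ) (f : ℝ → Matrix n p ℝ) : Matrix n p ℝ :=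
  Matrix.of fun i j => ∫ t in s, f t i j


lemma aux_bound {E : Type*} [NormedAddCommGroup E] [NormedSpace ℝ E] [CompleteSpace E]
    (A : ℝ → E → E) (K : ℝ) (hK : 0 ≤ K) (η : ℝ → E) (t : ℝ) (ht : t ∈ Set.Icc (0:ℝ) 1)
    (hA : ∀ t ∈ Set.Icc (0:ℝ) 1, ∀ v, ‖A t v‖ ≤ K * ‖v‖)
    (hη : ∀ t ∈ Set.Icc (0:ℝ) 1, η t = η 0 + ∫ τ in (0:ℝ)..t, A τ (η τ))
    (hI : IntervalIntegrable (fun τ => A τ (η τ)) volume 0 t) :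
    ContinuousOn η (Set.Icc 0 t) ∧ ∀ x ∈ Set.Icc 0 t, ‖η x‖ ≤ ‖η 0‖ * Real.exp K := by
  have hsub : ∀ x ∈ Set.Icc 0 t, x ∈ Set.Icc (0:ℝ) 1 := fun x hx => ⟨hx.1, hx.2.trans ht.2⟩
  have hc : ContinuousOn η (Set.Icc 0 t) := by
    have := intervalIntegral.continuousOn_primitive_interval' hI (a := 0) (by simp)
    rw [Set.uIcc_of_le ht.1] at this
    exact (continuousOn_const.add this).congr (fun x hx => hη x (hsub x hx))
  refine ⟨hc, ?_⟩
  set N : ℝ → ℝ := Set.IccExtend ht.1 ((Set.Icc 0 t).domRestrict fun x => ‖η x‖) with hN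
  have hNc : Continuous N := by
    apply Continuous.Icc_extend'
    exact continuousOn_iff_continuous_domRestrict.1 hc.norm
  have hNeq : ∀ x ∈ Set.Icc 0 t, N x = ‖η x‖ := by
    intro x hx
    rw [hN, Set.IccExtend_of_mem _ _ hx]; rfl
  have hN0 : ∀ x, 0 ≤ N x := by
    intro x; exact norm_nonneg _
  set g : ℝ → ℝ := fun x => ‖η 0‖ + K * ∫ τ in (0:ℝ)..x, N τ with hg
  have hgd : ∀ x, HasDerivAt g (K * N x) x := by
    intro x
    exact ((hNc.integral_hasStrictDerivAt 0 x).hasDerivAt.const_mul K).const_add _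
  have hle : ∀ x ∈ Set.Icc 0 t, ‖η x‖ ≤ g x := by
    intro x hx
    rw [hη x (hsub x hx)]
    refine (norm_add_le _ _).trans ?_
    simp only [hg]
    gcongr
    rw [← intervalIntegral.integral_const_mul]
    apply intervalIntegral.norm_integral_le_of_norm_le hx.1
    · filter_upwards with τ hτ
      have h' : τ ∈ Set.Icc 0 t := ⟨hτ.1.le, hτ.2.trans hx.2⟩
      rw [hNeq τ h']
      exact hA τ (hsub τ h') _
    · exact (hNc.const_mul K |>.intervalIntegrable _ _)
  have hgn : ∀ x ∈ Set.Icc 0 t, 0 ≤ g x := fun x hx => (norm_nonneg _).trans (hle x hx)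
  have := norm_le_gronwallBound_of_norm_deriv_right_le (f := g) (f' := fun x => K * N x)
    (δ := ‖η 0‖) (K := K) (ε := 0) (a := 0) (b := t)
    (fun x hx => (hgd x).continuousAt.continuousWithinAt)
    (fun x hx => (hgd x).hasDerivWithinAt) (by simp [hg])
    (by
      intro x hx
      have hx' := Set.Ico_subset_Icc_self hx
      rw [Real.norm_of_nonneg (hgn x hx'), Real.norm_of_nonneg (mul_nonneg hK (hN0 x)), hNeq x hx',
        add_zero]
      gcongr
      exact hle x hx')
  intro x hx
  have h2 := this x hx
  rw [gronwallBound_ε0, Real.norm_of_nonneg (hgn x hx)] at h2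
  refine (hle x hx).trans (h2.trans ?_)
  gcongr
  have := (hsub x hx).2
  nlinarith

lemma aux_integrable {E : Type*} [NormedAddCommGroup E] [NormedSpace ℝ E] [CompleteSpace E]
    (A : ℝ → E → E) (K : ℝ) (hK : 0 ≤ K) (η : ℝ → E)
    (hA : ∀ t ∈ Set.Icc (0:ℝ) 1, ∀ v, ‖A t v‖ ≤ K * ‖v‖)
    (hM : ∀ (S : Set ℝ) (ζ : ℝ → E), AEStronglyMeasurable ζ (volume.restrict S) →
      AEStronglyMeasurable (fun τ => A τ (ζ τ)) (volume.restrict S))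
    (hη : ∀ t ∈ Set.Icc (0:ℝ) 1, η t = η 0 + ∫ τ in (0:ℝ)..t, A τ (η τ)) :
    IntervalIntegrable (fun τ => A τ (η τ)) volume 0 1 := by
  set f := fun τ => A τ (η τ) with hf
  set S : Set ℝ := {t | t ∈ Set.Icc (0:ℝ) 1 ∧ IntervalIntegrable f volume 0 t} with hS
  have h0 : (0:ℝ) ∈ S := ⟨by simp, by simp⟩
  have hbd : BddAbove S := ⟨1, fun x hx => hx.1.2⟩
  set T := sSup S with hT
  have hT0 : 0 ≤ T := le_csSup hbd h0
  have hT1 : T ≤ 1 := csSup_le ⟨0, h0⟩ fun x hx => hx.1.2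
  have hlt : ∀ x, 0 ≤ x → x < T → ∃ t ∈ S, x < t := fun x _ hx => exists_lt_of_lt_csSup ⟨0, h0⟩ hx
  have hcont : ContinuousOn η (Set.Ico 0 T) := by
    intro x hx
    obtain ⟨t, ht, hxt⟩ := hlt x hx.1 hx.2
    have := (aux_bound A K hK η t ht.1 hA hη ht.2).1 x ⟨hx.1, hxt.le⟩
    apply this.mono_of_mem_nhdsWithin
    have h1 : Set.Iio t ∈ 𝓝[Set.Ico 0 T] x := mem_nhdsWithin_of_mem_nhds (Iio_mem_nhds hxt)
    filter_upwards [h1, self_mem_nhdsWithin] with y hy hy'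
    exact ⟨hy'.1, le_of_lt hy⟩
  have hbound : ∀ x ∈ Set.Ico 0 T, ‖f x‖ ≤ K * (‖η 0‖ * Real.exp K) := by
    intro x hx
    obtain ⟨t, ht, hxt⟩ := hlt x hx.1 hx.2
    refine (hA x ⟨hx.1, hx.2.le.trans hT1⟩ _).trans ?_
    gcongr
    exact (aux_bound A K hK η t ht.1 hA hη ht.2).2 x ⟨hx.1, hxt.le⟩
  have i1 : IntervalIntegrable f volume 0 T := by
    rw [intervalIntegrable_iff_integrableOn_Ico_of_le hT0]
    exact IntegrableOn.of_bound (by simp)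
      (hM _ _ (hcont.aestronglyMeasurable measurableSet_Ico)) (K * (‖η 0‖ * Real.exp K)) (by
        rw [ae_restrict_iff' measurableSet_Ico]
        exact Filter.Eventually.of_forall hbound)
  have hconst : ∀ x ∈ Set.Ioc T 1, η x = η 0 := by
    intro x hx
    have hx' : x ∈ Set.Icc (0:ℝ) 1 := ⟨hT0.trans hx.1.le, hx.2⟩
    rw [hη x hx', intervalIntegral.integral_undef, add_zero]
    intro h
    exact absurd (le_csSup hbd (show x ∈ S from ⟨hx', h⟩)) (not_le.2 hx.1)
  have i2 : IntervalIntegrable f volume T 1 := by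
    rw [intervalIntegrable_iff_integrableOn_Ioc_of_le hT1]
    refine IntegrableOn.of_bound (by simp)
      (hM _ _ ?_) (K * (‖η 0‖)) ?_
    · apply (aestronglyMeasurable_const (b := η 0)).congr
      rw [Filter.EventuallyEq, ae_restrict_iff' measurableSet_Ioc]
      exact Filter.Eventually.of_forall fun x hx => (hconst x hx).symm
    · rw [ae_restrict_iff' measurableSet_Ioc]
      refine Filter.Eventually.of_forall fun x hx => ?_
      rw [← hconst x hx]
      exact hA x ⟨hT0.trans hx.1.le, hx.2⟩ _
  exact i1.trans i2

lemma aux_lip {E : Type*} [NormedAddCommGroup E] [NormedSpace ℝ E] [CompleteSpace E]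
    (f : ℝ → E) (c : E) (K : ℝ) (hf : IntervalIntegrable f volume 0 1)
    (hb : ∀ t ∈ Set.Icc (0:ℝ) 1, ‖f t‖ ≤ K) :
    AbsolutelyContinuousOnInterval (fun t => c + ∫ τ in (0:ℝ)..t, f τ) 0 1 := by
  apply LipschitzOnWith.absolutelyContinuousOnInterval (K := K.toNNReal)
  have hK : 0 ≤ K := (norm_nonneg _).trans (hb 0 (by simp))
  rw [Set.uIcc_of_le zero_le_one]
  apply LipschitzOnWith.of_dist_le_mul
  intro x hx y hy
  have hs : ∀ x ∈ Set.Icc (0:ℝ) 1, IntervalIntegrable f volume 0 x := fun x hx =>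
    hf.mono_set (by
      rw [Set.uIcc_of_le zero_le_one, Set.uIcc_of_le hx.1]; exact Set.Icc_subset_Icc_right hx.2)
  rw [dist_add_left, dist_eq_norm, intervalIntegral.integral_interval_sub_left (hs x hx) (hs y hy),
    Real.coe_toNNReal _ hK, Real.dist_eq]
  apply intervalIntegral.norm_integral_le_of_norm_le_const
  intro z hz
  apply hb
  have := Set.uIoc_subset_uIcc hz
  exact (Set.uIcc_subset_Icc hy hx) this

lemma aux_parts (f g F G : ℝ → ℂ) (K L : ℝ)
    (hf : IntervalIntegrable f volume 0 1) (hg : IntervalIntegrable g volume 0 1)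
    (hfb : ∀ t ∈ Set.Icc (0:ℝ) 1, ‖f t‖ ≤ K) (hgb : ∀ t ∈ Set.Icc (0:ℝ) 1, ‖g t‖ ≤ L)
    (hF : ∀ t ∈ Set.Icc (0:ℝ) 1, F t = F 0 + ∫ τ in (0:ℝ)..t, f τ)
    (hG : ∀ t ∈ Set.Icc (0:ℝ) 1, G t = G 0 + ∫ τ in (0:ℝ)..t, g τ) :
    F 1 * G 1 - F 0 * G 0 = ∫ τ in (0:ℝ)..1, (f τ * G τ + F τ * g τ) := by
  set F' : ℝ → ℂ := fun t => F 0 + ∫ τ in (0:ℝ)..t, f τ with hF'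
  set G' : ℝ → ℂ := fun t => G 0 + ∫ τ in (0:ℝ)..t, g τ with hG'
  have hFa : AbsolutelyContinuousOnInterval F' 0 1 := aux_lip f _ K hf hfb
  have hGa : AbsolutelyContinuousOnInterval G' 0 1 := aux_lip g _ L hg hgb
  obtain ⟨C, hC⟩ := hFa.exists_bound
  obtain ⟨D, hD⟩ := hGa.exists_bound
  have hK : 0 ≤ K := (norm_nonneg _).trans (hfb 0 (by simp))
  have hC0 : 0 ≤ C := (norm_nonneg _).trans (hC 0 (by simp))
  set h : ℝ → ℂ := fun τ => f τ * G' τ + F' τ * g τ with hh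
  have hhi : IntervalIntegrable h volume 0 1 :=
    (hf.mul_continuousOn hGa.continuousOn).add (hg.continuousOn_mul hFa.continuousOn)
  have hHa : AbsolutelyContinuousOnInterval (fun t => 0 + ∫ τ in (0:ℝ)..t, h τ) 0 1 := by
    apply aux_lip h 0 (K * D + C * L) hhi
    intro t ht
    have ht' : t ∈ Set.uIcc (0:ℝ) 1 := by rwa [Set.uIcc_of_le zero_le_one]
    refine (norm_add_le _ _).trans ?_
    rw [norm_mul, norm_mul]
    gcongr
    exacts [hfb t ht, hD t ht', hC t ht', hgb t ht]
  have hP := (hFa.smul hGa).sub hHa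
  obtain ⟨c, hc⟩ := hP.const_of_ae_hasDerivAt_zero (by
    filter_upwards [hf.ae_hasDerivAt_integral, hg.ae_hasDerivAt_integral,
      hhi.ae_hasDerivAt_integral] with x h1 h2 h3 hx
    have d1 := ((h1 hx 0 (by simp)).const_add (F 0)).mul ((h2 hx 0 (by simp)).const_add (G 0))
    have d2 := (h3 hx 0 (by simp)).const_add 0
    have d3 := d1.sub d2
    convert! d3 using 1
    simp [hh, hF', hG'])
  have e0 := hc 0 (by simp)
  have e1 := hc 1 (by simp)
  rw [← e0] at e1
  simp only [Pi.sub_apply, smul_eq_mul, Pi.mul_apply, intervalIntegral.integral_same] at e1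
  have f1 := hF 1 (by simp)
  have g1 := hG 1 (by simp)
  have f0 : F' 0 = F 0 := by simp [hF']
  have g0 : G' 0 = G 0 := by simp [hG']
  rw [show F' 1 = F 1 from f1.symm, show G' 1 = G 1 from g1.symm, f0, g0] at e1
  have : ∫ τ in (0:ℝ)..1, (f τ * G τ + F τ * g τ) = ∫ τ in (0:ℝ)..1, h τ := by
    apply intervalIntegral.integral_congr
    intro x hx
    rw [Set.uIcc_of_le zero_le_one] at hx
    simp only [hh]
    rw [hF x hx, hG x hx]
  rw [this]
  linear_combination e1

lemma aux_sum {d : ℕ} (g : Fin (d + d) → ℂ) :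
    ∑ k, g k = ∑ i : Fin d, g (finSumFinEquiv (Sum.inl i)) +
      ∑ i : Fin d, g (finSumFinEquiv (Sum.inr i)) := by
  rw [← finSumFinEquiv.sum_comp, Fintype.sum_sum_type]

lemma aux_mulVec_J {d : ℕ} (v : Fin (d + d) → ℂ) (k : Fin d ⊕ Fin d) :
    (Jc d).mulVec v (finSumFinEquiv k) =
      Sum.elim (fun i => - v (finSumFinEquiv (Sum.inr i)))
        (fun i => v (finSumFinEquiv (Sum.inl i))) k := by
  rw [Matrix.mulVec, dotProduct, aux_sum]
  simp only [Jc, Matrix.reindex_apply, Matrix.submatrix_apply, Equiv.symm_apply_apply]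
  rcases k with k | k <;>
    simp [Matrix.one_apply]

/-- The control `u = Xᵀ p - s Yᵀ q`. -/
def auxw {d m : ℕ} (Z : ℝ → Matrix (Fin (d + d)) (Fin m) ℝ) (s : ℂ) (t : ℝ)
    (v : Fin (d + d) → ℂ) (j : Fin m) : ℂ :=
  ∑ i : Fin d, ((Z t (finSumFinEquiv (Sum.inr i)) j : ℂ) * v (finSumFinEquiv (Sum.inl i))
    - s * (Z t (finSumFinEquiv (Sum.inl i)) j : ℂ) * v (finSumFinEquiv (Sum.inr i)))

lemma aux_w {d m : ℕ} (Z : ℝ → Matrix (Fin (d + d)) (Fin m) ℝ) (s : ℂ) (t : ℝ)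
    (v : Fin (d + d) → ℂ) :
    (Zs Z s t * (Zs Z s t)ᵀ * Jc d).mulVec v = (Zs Z s t).mulVec (auxw Z s t v) := by
  rw [← Matrix.mulVec_mulVec, ← Matrix.mulVec_mulVec]
  congr 1
  ext j
  rw [Matrix.mulVec, dotProduct, aux_sum]
  simp only [aux_mulVec_J, Matrix.transpose_apply, Zs, Matrix.of_apply, Sum.elim_inl, Sum.elim_inr,
    auxw, Finset.sum_sub_distrib]
  simp [add_comm, ← sub_eq_add_neg]

lemma aux_top {d m : ℕ} (Z : ℝ → Matrix (Fin (d + d)) (Fin m) ℝ) (s : ℂ) (t : ℝ)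
    (w : Fin m → ℂ) (i : Fin d) :
    (Zs Z s t).mulVec w (finSumFinEquiv (Sum.inl i)) =
      s * ∑ j, (Z t (finSumFinEquiv (Sum.inl i)) j : ℂ) * w j := by
  simp [Matrix.mulVec, dotProduct, Zs, Finset.mul_sum, mul_assoc]

lemma aux_bot {d m : ℕ} (Z : ℝ → Matrix (Fin (d + d)) (Fin m) ℝ) (s : ℂ) (t : ℝ)
    (w : Fin m → ℂ) (i : Fin d) :
    (Zs Z s t).mulVec w (finSumFinEquiv (Sum.inr i)) =
      ∑ j, (Z t (finSumFinEquiv (Sum.inr i)) j : ℂ) * w j := by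
  simp [Matrix.mulVec, dotProduct, Zs]

/-- Measurable matrix families bounded on `[0,1]`. -/
def AuxGood {n p : Type*} (M : ℝ → Matrix n p ℂ) : Prop :=
  (∀ i j, Measurable fun t => M t i j) ∧
    ∃ C : ℝ, 0 ≤ C ∧ ∀ t ∈ Set.Icc (0:ℝ) 1, ∀ i j, ‖M t i j‖ ≤ C

lemma AuxGood.mul {n p q : Type*} [Fintype p] {M : ℝ → Matrix n p ℂ} {N : ℝ → Matrix p q ℂ}
    (hM : AuxGood M) (hN : AuxGood N) : AuxGood (fun t => M t * N t) := by
  obtain ⟨hM, C, hC, hMC⟩ := hM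
  obtain ⟨hN, D, hD, hND⟩ := hN
  refine ⟨fun i j => ?_, ∑ _k : p, C * D, by positivity, fun t ht i j => ?_⟩
  · simp only [Matrix.mul_apply]
    exact Finset.measurable_fun_sum _ fun k _ => (hM i k).mul (hN k j)
  · simp only [Matrix.mul_apply]
    refine norm_sum_le_of_le _ fun k _ => ?_
    rw [norm_mul]
    exact mul_le_mul (hMC t ht i k) (hND t ht k j) (norm_nonneg _) hC

lemma AuxGood.bound {n : Type*} [Fintype n] {M : ℝ → Matrix n n ℂ} (hM : AuxGood M) :
    ∃ K : ℝ, 0 ≤ K ∧ ∀ t ∈ Set.Icc (0:ℝ) 1, ∀ v, ‖(M t).mulVec v‖ ≤ K * ‖v‖ := by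
  obtain ⟨hM, C, hC, hMC⟩ := hM
  refine ⟨∑ _k : n, C, by positivity, fun t ht v => ?_⟩
  rw [pi_norm_le_iff_of_nonneg (by positivity)]
  intro i
  rw [Matrix.mulVec, dotProduct, Finset.sum_mul]
  refine norm_sum_le_of_le _ fun k _ => ?_
  rw [norm_mul]
  exact mul_le_mul (hMC t ht i k) (norm_le_pi_norm v k) (norm_nonneg _) hC

lemma AuxGood.meas {n : Type*} [Fintype n] {M : ℝ → Matrix n n ℂ} (hM : AuxGood M)
    (S : Set ℝ) (ζ : ℝ → n → ℂ) (h : AEStronglyMeasurable ζ (volume.restrict S)) :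
    AEStronglyMeasurable (fun τ => (M τ).mulVec (ζ τ)) (volume.restrict S) := by
  refine AEMeasurable.aestronglyMeasurable ?_
  rw [aemeasurable_pi_iff]
  intro i
  simp only [Matrix.mulVec, dotProduct]
  refine Finset.aemeasurable_fun_sum _ fun k _ => ?_
  exact (hM.1 i k).aemeasurable.mul ((aemeasurable_pi_iff.1 h.aemeasurable) k)

lemma aux_good {d m : ℕ} (Z : ℝ → Matrix (Fin (d + d)) (Fin m) ℝ) (s : ℂ)
    (hZmeas : ∀ i j, Measurable fun t => Z t i j)
    (hZbdd : ∃ C : ℝ, ∀ t ∈ Set.Icc (0:ℝ) 1, ∀ i j, |Z t i j| ≤ C) :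
    AuxGood (fun t => Zs Z s t * (Zs Z s t)ᵀ * Jc d) := by
  have h1 : AuxGood (fun t => Zs Z s t) := by
    obtain ⟨C, hC⟩ := hZbdd
    refine ⟨fun i j => ?_, (‖s‖ + 1) * |C|, by positivity, fun t ht i j => ?_⟩
    · simp only [Zs, Matrix.of_apply]
      exact (Complex.measurable_ofReal.comp (hZmeas i j)).const_mul _
    · simp only [Zs, Matrix.of_apply, norm_mul, Complex.norm_real, Real.norm_eq_abs]
      refine mul_le_mul ?_ ((hC t ht i j).trans (le_abs_self C)) (abs_nonneg _) (by positivity)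
      split_ifs
      · linarith
      · simp
  have h2 : AuxGood (fun t => (Zs Z s t)ᵀ) :=
    ⟨fun i j => h1.1 j i, by
      obtain ⟨C, hC, h⟩ := h1.2
      exact ⟨C, hC, fun t ht i j => h t ht j i⟩⟩
  have h3 : AuxGood (fun _ : ℝ => Jc d) :=
    ⟨fun i j => measurable_const, ∑ i, ∑ j, ‖Jc d i j‖, by positivity, fun t ht i j => by
      refine le_trans ?_ (Finset.single_le_sum (f := fun i => ∑ j, ‖Jc d i j‖)
        (fun _ _ => by positivity) (Finset.mem_univ i))
      exact Finset.single_le_sum (f := fun j => ‖Jc d i j‖)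
        (fun _ _ => by positivity) (Finset.mem_univ j)⟩
  exact (h1.mul h2).mul h3

lemma aux_identity {d m : ℕ} (Z : ℝ → Matrix (Fin (d + d)) (Fin m) ℝ) (s : ℂ) (t : ℝ)
    (v : Fin (d + d) → ℂ) :
    ∃ β : ℝ, ∑ i : Fin d,
      ((Zs Z s t).mulVec (auxw Z s t v) (finSumFinEquiv (Sum.inl i)) *
          starRingEnd ℂ (v (finSumFinEquiv (Sum.inr i))) +
        v (finSumFinEquiv (Sum.inl i)) *
          starRingEnd ℂ ((Zs Z s t).mulVec (auxw Z s t v) (finSumFinEquiv (Sum.inr i)))) =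
      ((∑ j, Complex.normSq (auxw Z s t v j) : ℝ) : ℂ) + s * (β : ℂ) := by
  set w := auxw Z s t v with hw
  set b : ℂ := ∑ i : Fin d, ∑ j, (Z t (finSumFinEquiv (Sum.inl i)) j : ℂ) * w j *
    starRingEnd ℂ (v (finSumFinEquiv (Sum.inr i))) with hb
  refine ⟨2 * b.re, ?_⟩
  have e1 : ∑ i : Fin d, (Zs Z s t).mulVec w (finSumFinEquiv (Sum.inl i)) *
          starRingEnd ℂ (v (finSumFinEquiv (Sum.inr i))) = s * b := by
    rw [hb, Finset.mul_sum]
    refine Finset.sum_congr rfl fun i _ => ?_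
    rw [aux_top, mul_assoc, Finset.sum_mul]
  have e2 : ∑ i : Fin d, v (finSumFinEquiv (Sum.inl i)) *
          starRingEnd ℂ ((Zs Z s t).mulVec w (finSumFinEquiv (Sum.inr i))) =
      ∑ j, starRingEnd ℂ (w j) * ∑ i : Fin d,
        (Z t (finSumFinEquiv (Sum.inr i)) j : ℂ) * v (finSumFinEquiv (Sum.inl i)) := by
    simp only [aux_bot, map_sum, map_mul, Complex.conj_ofReal, Finset.mul_sum]
    rw [Finset.sum_comm]
    refine Finset.sum_congr rfl fun i _ => Finset.sum_congr rfl fun j _ => ?_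
    ring
  have e3 : ∀ j, ∑ i : Fin d,
        (Z t (finSumFinEquiv (Sum.inr i)) j : ℂ) * v (finSumFinEquiv (Sum.inl i)) =
      w j + s * ∑ i : Fin d, (Z t (finSumFinEquiv (Sum.inl i)) j : ℂ) *
        v (finSumFinEquiv (Sum.inr i)) := by
    intro j
    simp only [hw, auxw, Finset.sum_sub_distrib, Finset.mul_sum, mul_assoc]
    ring
  have e4 : starRingEnd ℂ b = ∑ j, starRingEnd ℂ (w j) * ∑ i : Fin d,
      (Z t (finSumFinEquiv (Sum.inl i)) j : ℂ) * v (finSumFinEquiv (Sum.inr i)) := by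
    simp only [hb, map_sum, map_mul, Complex.conj_ofReal, Complex.conj_conj, Finset.mul_sum]
    rw [Finset.sum_comm]
    refine Finset.sum_congr rfl fun i _ => Finset.sum_congr rfl fun j _ => ?_
    ring
  rw [Finset.sum_add_distrib, e1, e2]
  simp only [e3]
  have e5 : ∑ j, starRingEnd ℂ (w j) * (w j + s * ∑ i : Fin d,
      (Z t (finSumFinEquiv (Sum.inl i)) j : ℂ) * v (finSumFinEquiv (Sum.inr i))) =
      ((∑ j, Complex.normSq (w j) : ℝ) : ℂ) + s * starRingEnd ℂ b := by
    rw [e4, Finset.mul_sum, Complex.ofReal_sum, ← Finset.sum_add_distrib]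
    refine Finset.sum_congr rfl fun j _ => ?_
    rw [Complex.normSq_eq_conj_mul_self]
    ring
  rw [e5]
  have e6 : ((2 * b.re : ℝ) : ℂ) = b + starRingEnd ℂ b := by
    rw [Complex.add_conj]
  rw [e6]
  ring

/-- **Corollary 2.**  All roots of the equation `det Q₁ˢ = 0`, `s ∈ ℂ`, are real. -/
theorem roots_of_detQ_are_real
    (d m : ℕ) (hd : 0 < d) (hm : 0 < m)
    (Z : ℝ → Matrix (Fin (d + d)) (Fin m) ℝ)
    (hZmeas : ∀ i j, Measurable fun t => Z t i j)
    (hZbdd : ∃ C : ℝ, ∀ t ∈ Set.Icc (0:ℝ) 1, ∀ i j, |Z t i j| ≤ C)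
    (hΓinv : IsUnit (mSetIntegral (Set.Icc (0:ℝ) 1)
      (fun t => Xblock Z t * (Xblock Z t)ᵀ)).det)
    (Q : ℂ → Matrix (Fin d) (Fin d) ℂ)
    (hQ : ∀ (s : ℂ) (p₀ : Fin d → ℂ), ∃ η : ℝ → Fin (d + d) → ℂ,
      IsJacobiSolutionC Z s η ∧
      (∀ i, η 0 (finSumFinEquiv (Sum.inl i)) = p₀ i) ∧
      (∀ i, η 0 (finSumFinEquiv (Sum.inr i)) = 0) ∧
      (∀ i, η 1 (finSumFinEquiv (Sum.inr i)) = (Q s).mulVec p₀ i)) :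
    ∀ s : ℂ, (Q s).det = 0 → s.im = 0 := by
  intro s hs
  by_contra him
  obtain ⟨v, hv, hQv⟩ := Matrix.exists_mulVec_eq_zero_iff.2 hs
  obtain ⟨η, hη, hp0, hq0, hq1⟩ := hQ s v
  have hgood := aux_good Z s hZmeas hZbdd
  obtain ⟨K, hK, hA⟩ := hgood.bound
  have hI := aux_integrable (fun τ v => (Zs Z s τ * (Zs Z s τ)ᵀ * Jc d).mulVec v) K hK η hA
    hgood.meas hη
  obtain ⟨hcont, hbd⟩ := aux_bound (fun τ v => (Zs Z s τ * (Zs Z s τ)ᵀ * Jc d).mulVec v) K hK η 1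
    (by simp) hA hη hI
  set f : ℝ → Fin (d + d) → ℂ := fun τ => (Zs Z s τ * (Zs Z s τ)ᵀ * Jc d).mulVec (η τ) with hf
  have hfi : ∀ k, IntervalIntegrable (fun τ => f τ k) volume 0 1 := fun k =>
    ⟨(ContinuousLinearMap.proj (R := ℝ) (φ := fun _ : Fin (d + d) => ℂ) k).integrable_comp hI.1,
      (ContinuousLinearMap.proj (R := ℝ) (φ := fun _ : Fin (d + d) => ℂ) k).integrable_comp hI.2⟩
  have hsub : ∀ t ∈ Set.Icc (0:ℝ) 1, IntervalIntegrable f volume 0 t := fun t ht =>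
    hI.mono_set (by
      rw [Set.uIcc_of_le zero_le_one, Set.uIcc_of_le ht.1]; exact Set.Icc_subset_Icc_right ht.2)
  have hcomp : ∀ k, ∀ t ∈ Set.Icc (0:ℝ) 1, η t k = η 0 k + ∫ τ in (0:ℝ)..t, f τ k := by
    intro k t ht
    have h1 := congrFun (hη t ht) k
    rw [Pi.add_apply] at h1
    rw [h1]
    congr 1
    exact ((ContinuousLinearMap.proj (R := ℝ) (φ := fun _ : Fin (d + d) => ℂ)
      k).intervalIntegral_comp_comm (hsub t ht)).symm
  have hck : ∀ k, ContinuousOn (fun t => η t k) (Set.uIcc (0:ℝ) 1) := by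
    intro k
    rw [Set.uIcc_of_le zero_le_one]
    exact (continuous_apply k).comp_continuousOn hcont
  have hfb : ∀ k, ∀ t ∈ Set.Icc (0:ℝ) 1, ‖f t k‖ ≤ K * (‖η 0‖ * Real.exp K) := by
    intro k t ht
    refine (norm_le_pi_norm _ k).trans ((hA t ht _).trans ?_)
    gcongr
    exact hbd t ht
  have hconj : ∀ k, IntervalIntegrable (fun τ => starRingEnd ℂ (f τ k)) volume 0 1 := fun k =>
    ⟨Complex.conjCLE.toContinuousLinearMap.integrable_comp (hfi k).1,
      Complex.conjCLE.toContinuousLinearMap.integrable_comp (hfi k).2⟩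
  set hh : Fin d → ℝ → ℂ := fun i τ =>
    f τ (finSumFinEquiv (Sum.inl i)) * starRingEnd ℂ (η τ (finSumFinEquiv (Sum.inr i))) +
      η τ (finSumFinEquiv (Sum.inl i)) * starRingEnd ℂ (f τ (finSumFinEquiv (Sum.inr i))) with hhh
  have hhi : ∀ i, IntervalIntegrable (hh i) volume 0 1 := fun i =>
    ((hfi _).mul_continuousOn (Complex.continuous_conj.comp_continuousOn (hck _))).add
      ((hconj _).continuousOn_mul (hck _))
  have hhint : ∀ i, ∫ τ in (0:ℝ)..1, hh i τ = 0 := by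
    intro i
    have := aux_parts (fun τ => f τ (finSumFinEquiv (Sum.inl i)))
      (fun τ => starRingEnd ℂ (f τ (finSumFinEquiv (Sum.inr i))))
      (fun τ => η τ (finSumFinEquiv (Sum.inl i)))
      (fun τ => starRingEnd ℂ (η τ (finSumFinEquiv (Sum.inr i))))
      (K * (‖η 0‖ * Real.exp K)) (K * (‖η 0‖ * Real.exp K)) (hfi _) (hconj _) (hfb _)
      (fun t ht => by rw [RCLike.norm_conj]; exact hfb _ t ht) (hcomp _)
      (fun t ht => by
        rw [intervalIntegral.intervalIntegral_conj, ← map_add, ← hcomp _ t ht])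
    simp only [hhh]
    rw [← this, hq0 i, hq1 i, hQv]
    simp
  set h : ℝ → ℂ := fun τ => ∑ i, hh i τ with hhd
  have hint : IntervalIntegrable h volume 0 1 := by
    have := IntervalIntegrable.sum Finset.univ (fun i _ => hhi i)
    have e : h = ∑ i, hh i := by
      funext τ
      simp [hhd]
    rw [e]
    exact this
  have hz : ∫ τ in (0:ℝ)..1, h τ = 0 := by
    simp only [hhd]
    rw [intervalIntegral.integral_finsetSum (fun i _ => hhi i)]
    exact Finset.sum_eq_zero fun i _ => hhint i
  set α : ℝ → ℝ := fun τ => ∑ j, Complex.normSq (auxw Z s τ (η τ) j) with hα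
  have hαh : ∀ τ, α τ = (h τ).re - s.re / s.im * (h τ).im := by
    intro τ
    obtain ⟨β, hβ⟩ := aux_identity Z s τ (η τ)
    have : h τ = (α τ : ℂ) + s * (β : ℂ) := by
      rw [← hβ]
      simp only [hhd, hhh, hf, aux_w]
    rw [this]
    simp
    field_simp
    ring
  have hre : IntervalIntegrable (fun τ => (h τ).re) volume 0 1 :=
    ⟨Complex.reCLM.integrable_comp hint.1, Complex.reCLM.integrable_comp hint.2⟩
  have him' : IntervalIntegrable (fun τ => (h τ).im) volume 0 1 :=
    ⟨Complex.imCLM.integrable_comp hint.1, Complex.imCLM.integrable_comp hint.2⟩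
  have hrez : ∫ τ in (0:ℝ)..1, (h τ).re = 0 := by
    have := Complex.reCLM.intervalIntegral_comp_comm hint
    rw [hz] at this
    simpa using this
  have himz : ∫ τ in (0:ℝ)..1, (h τ).im = 0 := by
    have := Complex.imCLM.intervalIntegral_comp_comm hint
    rw [hz] at this
    simpa using this
  have hαe : α = fun τ => (h τ).re - s.re / s.im * (h τ).im := funext hαh
  have hαi : IntervalIntegrable α volume 0 1 := by
    rw [hαe]
    exact hre.sub (him'.const_mul _)
  have hαz : ∫ τ in (0:ℝ)..1, α τ = 0 := by
    rw [hαe, intervalIntegral.integral_sub hre (him'.const_mul _),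
      intervalIntegral.integral_const_mul, hrez, himz]
    simp
  have hαae : ∀ᵐ τ, τ ∈ Set.Ioc (0:ℝ) 1 → α τ = 0 := by
    rw [intervalIntegral.integral_of_le zero_le_one,
      integral_eq_zero_iff_of_nonneg_ae (Filter.Eventually.of_forall fun τ =>
        Finset.sum_nonneg fun j _ => Complex.normSq_nonneg _) hαi.1, Filter.EventuallyEq,
      ae_restrict_iff' measurableSet_Ioc] at hαz
    exact hαz
  have hwae : ∀ᵐ τ, τ ∈ Set.Ioc (0:ℝ) 1 → auxw Z s τ (η τ) = 0 := by
    filter_upwards [hαae] with τ hτ hτ'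
    ext j
    have := (Finset.sum_eq_zero_iff_of_nonneg fun j _ => Complex.normSq_nonneg _).1 (hτ hτ') j
      (Finset.mem_univ j)
    simpa using this
  have hconst : ∀ t ∈ Set.Icc (0:ℝ) 1, η t = η 0 := by
    intro t ht
    rw [hη t ht, intervalIntegral.integral_congr_ae (g := fun _ => 0)]
    · simp
    · filter_upwards [hwae] with τ hτ hτ'
      rw [Set.uIoc_of_le ht.1] at hτ'
      rw [aux_w, hτ ⟨hτ'.1, hτ'.2.trans ht.2⟩, Matrix.mulVec_zero]
  have hXae : ∀ᵐ τ, τ ∈ Set.Ioc (0:ℝ) 1 → ∀ j, ∑ k : Fin d, (Xblock Z τ k j : ℂ) * v k = 0 := by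
    filter_upwards [hwae] with τ hτ hτ' j
    have h1 := congrFun (hτ hτ') j
    rw [hconst τ (Set.Ioc_subset_Icc_self hτ')] at h1
    simp only [auxw, hq0, hp0, mul_zero, sub_zero, Pi.zero_apply] at h1
    exact h1
  set Γ := mSetIntegral (Set.Icc (0:ℝ) 1) (fun t => Xblock Z t * (Xblock Z t)ᵀ) with hΓ
  have hXi : ∀ i k, IntegrableOn (fun t => (Xblock Z t * (Xblock Z t)ᵀ) i k) (Set.Icc (0:ℝ) 1) := by
    intro i k
    obtain ⟨C, hC⟩ := hZbdd
    refine IntegrableOn.of_bound (by simp) ?_ (∑ _j : Fin m, C * C) ?_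
    · refine Measurable.aestronglyMeasurable ?_
      simp only [Matrix.mul_apply, Matrix.transpose_apply, Xblock, Matrix.of_apply]
      exact Finset.measurable_fun_sum _ fun j _ => (hZmeas _ _).mul (hZmeas _ _)
    · rw [ae_restrict_iff' measurableSet_Icc]
      refine Filter.Eventually.of_forall fun t ht => ?_
      simp only [Matrix.mul_apply, Matrix.transpose_apply, Xblock, Matrix.of_apply]
      refine norm_sum_le_of_le _ fun j _ => ?_
      rw [norm_mul]
      exact mul_le_mul (hC t ht _ _) (hC t ht _ _) (norm_nonneg _)
        ((abs_nonneg _).trans (hC t ht (finSumFinEquiv (Sum.inr i)) j))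
  have hΓv : (Γ.map Complex.ofReal).mulVec v = 0 := by
    ext i
    simp only [Matrix.mulVec, dotProduct, Matrix.map_apply, hΓ, mSetIntegral, Matrix.of_apply,
      Pi.zero_apply]
    simp only [← integral_complex_ofReal, ← integral_mul_const]
    have hk : ∀ k, Integrable (fun t => (((Xblock Z t * (Xblock Z t)ᵀ) i k : ℝ) : ℂ) * v k)
        (volume.restrict (Set.Icc (0:ℝ) 1)) := fun k =>
      (Complex.ofRealCLM.integrable_comp (hXi i k)).mul_const (v k)
    rw [← integral_finsetSum _ (fun k _ => hk k),
      integral_Icc_eq_integral_Ioc]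
    refine integral_eq_zero_of_ae ?_
    rw [Filter.EventuallyEq, ae_restrict_iff' measurableSet_Ioc]
    filter_upwards [hXae] with τ hτ hτ'
    have h1 := hτ hτ'
    simp only [Matrix.mul_apply, Matrix.transpose_apply, Complex.ofReal_sum, Complex.ofReal_mul,
      Finset.sum_mul, Pi.zero_apply]
    rw [Finset.sum_comm]
    refine Finset.sum_eq_zero fun j _ => ?_
    simp only [mul_assoc, ← Finset.mul_sum, h1 j, mul_zero]
  have hdet : (Γ.map Complex.ofReal).det = 0 := Matrix.exists_mulVec_eq_zero_iff.1 ⟨v, hv, hΓv⟩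
  have hdet2 : (Γ.map Complex.ofReal).det = (Γ.det : ℂ) :=
    (RingHom.map_det Complex.ofRealHom Γ).symm
  rw [hdet2] at hdet
  exact hΓinv.ne_zero (by exact_mod_cast hdet)

end
end

section
/- Let t ↦ Z_t be a bounded measurable family of 2d×m real matrices on [0,1] and let s ∈ ℝ∖{0}. A function v in the complexification V_ℂ = {v ∈ L²([0,1];ℂ^m) : ∫₀¹ X_t v(t) dt = 0} satisfies K v = −(1/s)·v if and only if there exists an absolutely continuous η : [0,1] → ℂ^{2d} solving the complexified Jacobi equation η̇(t) = Z_tˢ (Z_tˢ)ᵀ J η(t) for a.e. t, such that the q-components of η(0) and of η(1) are both zero and v(t) = (Z_tˢ)ᵀ J η(t) for a.e. t ∈ [0,1]. -/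
open MeasureTheory Filter Topology Matrix

noncomputable section

/-- Lebesgue measure restricted to `[0,1]`. -/
abbrev μ01 : Measure ℝ := volume.restrict (Set.Icc (0 : ℝ) 1)

/-- `L²([0,1]; ℂᵐ)`. -/
abbrev L2mC (m : ℕ) := Lp (EuclideanSpace ℂ (Fin m)) 2 μ01



lemma Jc_p {d : ℕ} (x : Fin (d + d) → ℂ) (i : Fin d) :
    (Jc d).mulVec x (finSumFinEquiv (Sum.inl i)) = - x (finSumFinEquiv (Sum.inr i)) := by
  simp only [Jc, Matrix.mulVec, dotProduct]
  rw [← finSumFinEquiv.sum_comp]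
  simp [-finSumFinEquiv_apply_left, -finSumFinEquiv_apply_right, Fintype.sum_sum_type, Matrix.one_apply]

lemma Jc_q {d : ℕ} (x : Fin (d + d) → ℂ) (i : Fin d) :
    (Jc d).mulVec x (finSumFinEquiv (Sum.inr i)) = x (finSumFinEquiv (Sum.inl i)) := by
  simp only [Jc, Matrix.mulVec, dotProduct]
  rw [← finSumFinEquiv.sum_comp]
  simp [-finSumFinEquiv_apply_left, -finSumFinEquiv_apply_right, Fintype.sum_sum_type, Matrix.one_apply]

lemma Jc_dot {d : ℕ} (x y : Fin (d + d) → ℂ) :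
    (Jc d).mulVec x ⬝ᵥ y = ∑ i : Fin d, (x (finSumFinEquiv (Sum.inl i)) * y (finSumFinEquiv (Sum.inr i))
      - x (finSumFinEquiv (Sum.inr i)) * y (finSumFinEquiv (Sum.inl i))) := by
  rw [dotProduct, ← finSumFinEquiv.sum_comp, Fintype.sum_sum_type]
  simp only [Jc_p, Jc_q]
  rw [← Finset.sum_add_distrib]
  exact Finset.sum_congr rfl fun i _ => by ring

lemma Jc_dot_antisymm {d : ℕ} (x y : Fin (d + d) → ℂ) :
    (Jc d).mulVec x ⬝ᵥ y = - (x ⬝ᵥ (Jc d).mulVec y) := by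
  rw [dotProduct_comm x, Jc_dot, Jc_dot, ← Finset.sum_neg_distrib]
  exact Finset.sum_congr rfl fun i _ => by ring

/-- integration by parts via Fubini -/
lemma parts (f g : ℝ → ℂ) (hf : Integrable f μ01) (hg : Integrable g μ01) :
    (∫ t in Set.Icc (0:ℝ) 1, f t * ∫ τ in Set.Icc (0:ℝ) t, g τ) +
    (∫ t in Set.Icc (0:ℝ) 1, g t * ∫ τ in Set.Icc (0:ℝ) t, f τ) =
    (∫ t in Set.Icc (0:ℝ) 1, f t) * ∫ t in Set.Icc (0:ℝ) 1, g t := by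
  have key : ∀ (k : ℝ → ℂ), ∀ t ∈ Set.Icc (0:ℝ) 1,
      ∫ τ in Set.Icc (0:ℝ) t, k τ = ∫ τ, (Set.Iic t).indicator k τ ∂μ01 := by
    intro k t ht
    rw [integral_indicator measurableSet_Iic, Measure.restrict_restrict measurableSet_Iic]
    congr 2
    ext x; simp only [Set.mem_Icc, Set.mem_inter_iff, Set.mem_Iic] at *
    constructor
    · rintro ⟨a, b⟩; exact ⟨b, a, b.trans ht.2⟩
    · rintro ⟨a, b, c⟩; exact ⟨b, a⟩
  have hprod : Integrable (fun z : ℝ × ℝ => f z.1 * g z.2) (μ01.prod μ01) := hf.mul_prod hg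
  have e1 : (∫ t in Set.Icc (0:ℝ) 1, f t * ∫ τ in Set.Icc (0:ℝ) t, g τ) =
      ∫ z in {z : ℝ × ℝ | z.2 ≤ z.1}, f z.1 * g z.2 ∂(μ01.prod μ01) := by
    rw [← integral_indicator (measurableSet_le measurable_snd measurable_fst),
      integral_prod _ (hprod.indicator (measurableSet_le measurable_snd measurable_fst))]
    refine setIntegral_congr_fun measurableSet_Icc fun t ht => ?_
    rw [key g t ht, ← integral_const_mul]
    refine integral_congr_ae (.of_forall fun τ => ?_)
    by_cases h : τ ≤ t <;> simp [Set.indicator, h]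
  have e2 : (∫ t in Set.Icc (0:ℝ) 1, g t * ∫ τ in Set.Icc (0:ℝ) t, f τ) =
      ∫ z in {z : ℝ × ℝ | z.1 ≤ z.2}, f z.1 * g z.2 ∂(μ01.prod μ01) := by
    rw [← integral_indicator (measurableSet_le measurable_fst measurable_snd),
      integral_prod_symm _ (hprod.indicator (measurableSet_le measurable_fst measurable_snd))]
    refine setIntegral_congr_fun measurableSet_Icc fun t ht => ?_
    rw [key f t ht, ← integral_const_mul]
    refine integral_congr_ae (.of_forall fun τ => ?_)
    by_cases h : τ ≤ t <;> simp [Set.indicator, h, mul_comm]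
  have e3 : ∫ z in {z : ℝ × ℝ | z.1 ≤ z.2}, f z.1 * g z.2 ∂(μ01.prod μ01) =
      ∫ z in {z : ℝ × ℝ | z.2 ≤ z.1}ᶜ, f z.1 * g z.2 ∂(μ01.prod μ01) := by
    refine setIntegral_congr_set ?_
    have h0 : (μ01.prod μ01) {z : ℝ × ℝ | z.1 = z.2} = 0 := by
      rw [Measure.prod_apply (measurableSet_eq_fun measurable_fst measurable_snd)]
      simp
    have := measure_eq_zero_iff_ae_notMem.1 h0
    filter_upwards [this] with z hz
    apply propext
    change z.1 ≤ z.2 ↔ ¬ (z.2 ≤ z.1)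
    change ¬ (z.1 = z.2) at hz
    rw [not_le]
    exact ⟨fun h => lt_of_le_of_ne h hz, le_of_lt⟩
  rw [e1, e2, e3, integral_add_compl (measurableSet_le measurable_snd measurable_fst) hprod,
    integral_prod_mul]

lemma Zs_formula {d m : ℕ} (Z : ℝ → Matrix (Fin (d + d)) (Fin m) ℝ) (s : ℂ) (t : ℝ)
    (x : Fin (d + d) → ℂ) (j : Fin m) :
    ((Zs Z s t)ᵀ * Jc d).mulVec x j = ∑ i : Fin d,
      ((Z t (finSumFinEquiv (Sum.inr i)) j : ℂ) * x (finSumFinEquiv (Sum.inl i))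
        - s * (Z t (finSumFinEquiv (Sum.inl i)) j : ℂ) * x (finSumFinEquiv (Sum.inr i))) := by
  rw [← Matrix.mulVec_mulVec, Matrix.mulVec, dotProduct, ← finSumFinEquiv.sum_comp,
    Fintype.sum_sum_type]
  simp only [Jc_p, Jc_q]
  rw [← Finset.sum_add_distrib]
  refine Finset.sum_congr rfl fun i _ => ?_
  simp [Zs]
  ring

lemma Zt_formula {d m : ℕ} (A : Matrix (Fin (d + d)) (Fin m) ℝ)
    (x : Fin (d + d) → ℂ) (j : Fin m) :
    (A.map Complex.ofReal)ᵀ.mulVec ((Jc d).mulVec x) j = ∑ i : Fin d,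
      ((A (finSumFinEquiv (Sum.inr i)) j : ℂ) * x (finSumFinEquiv (Sum.inl i))
        - (A (finSumFinEquiv (Sum.inl i)) j : ℂ) * x (finSumFinEquiv (Sum.inr i))) := by
  rw [Matrix.mulVec, dotProduct, ← finSumFinEquiv.sum_comp,
    Fintype.sum_sum_type]
  simp only [Jc_p, Jc_q]
  rw [← Finset.sum_add_distrib]
  refine Finset.sum_congr rfl fun i _ => ?_
  simp
  ring

section
variable {d m : ℕ} {Z : ℝ → Matrix (Fin (d + d)) (Fin m) ℝ}

lemma memLp_coord (v : L2mC m) (j : Fin m) : MemLp (fun t => (v t) j) 2 μ01 := by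
  have := Lp.memLp v
  exact this.eval_piLp j

lemma memLp_mulVec (hZmeas : ∀ i j, Measurable fun t => Z t i j)
    (hZbdd : ∃ C : ℝ, ∀ t ∈ Set.Icc (0:ℝ) 1, ∀ i j, |Z t i j| ≤ C) (v : L2mC m) (i) :
    MemLp (fun t => ((Z t).map Complex.ofReal).mulVec (v t) i) 2 μ01 := by
  obtain ⟨C, hC⟩ := hZbdd
  simp only [Matrix.mulVec, dotProduct]
  refine memLp_finsetSum _ fun j _ => ?_
  refine (memLp_coord v j).of_le_mul (c := C) ?_ ?_
  · exact ((Complex.measurable_ofReal.comp (hZmeas i j)).aestronglyMeasurable).mul (memLp_coord v j).1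
  · filter_upwards [ae_restrict_mem measurableSet_Icc] with t ht
    simp only [Matrix.map_apply, norm_mul, Complex.norm_real, Real.norm_eq_abs]
    gcongr
    exact hC t ht i j

lemma int_mulVec (hZmeas : ∀ i j, Measurable fun t => Z t i j)
    (hZbdd : ∃ C : ℝ, ∀ t ∈ Set.Icc (0:ℝ) 1, ∀ i j, |Z t i j| ≤ C) (v : L2mC m) (i) :
    Integrable (fun t => ((Z t).map Complex.ofReal).mulVec (v t) i) μ01 :=
  (memLp_mulVec hZmeas hZbdd v i).integrable (by norm_num)

/-- primitive of `Z v` -/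
def Fp (Z : ℝ → Matrix (Fin (d + d)) (Fin m) ℝ) (v : L2mC m) (t : ℝ) : Fin (d + d) → ℂ :=
  ∫ τ in Set.Icc (0:ℝ) t, ((Z τ).map Complex.ofReal).mulVec (v τ)

lemma Fp_apply (hZmeas : ∀ i j, Measurable fun t => Z t i j)
    (hZbdd : ∃ C : ℝ, ∀ t ∈ Set.Icc (0:ℝ) 1, ∀ i j, |Z t i j| ≤ C) (v : L2mC m)
    {t : ℝ} (ht : t ∈ Set.Icc (0:ℝ) 1) (i) :
    Fp Z v t i = ∫ τ in Set.Icc (0:ℝ) t, ((Z τ).map Complex.ofReal).mulVec (v τ) i := by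
  rw [Fp, eval_integral]
  intro i
  exact IntegrableOn.mono_set (int_mulVec hZmeas hZbdd v i) (Set.Icc_subset_Icc_right ht.2)

lemma Fp_memLp (hZmeas : ∀ i j, Measurable fun t => Z t i j)
    (hZbdd : ∃ C : ℝ, ∀ t ∈ Set.Icc (0:ℝ) 1, ∀ i j, |Z t i j| ≤ C) (v : L2mC m) (i) :
    MemLp (fun t => Fp Z v t i) ⊤ μ01 := by
  have hc : ContinuousOn (fun t => Fp Z v t i) (Set.Icc 0 1) := by
    refine (intervalIntegral.continuousOn_primitive_Icc (int_mulVec hZmeas hZbdd v i)).congr ?_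
    intro t ht
    exact Fp_apply hZmeas hZbdd v ht i
  obtain ⟨C, hC⟩ := isCompact_Icc.exists_bound_of_continuousOn hc
  refine memLp_top_of_bound (hc.aestronglyMeasurable measurableSet_Icc) C ?_
  filter_upwards [ae_restrict_mem measurableSet_Icc] with t ht using hC t ht

lemma Z_memLp (hZmeas : ∀ i j, Measurable fun t => Z t i j)
    (hZbdd : ∃ C : ℝ, ∀ t ∈ Set.Icc (0:ℝ) 1, ∀ i j, |Z t i j| ≤ C) (i j) :
    MemLp (fun t => (Z t i j : ℂ)) ⊤ μ01 := by
  obtain ⟨C, hC⟩ := hZbdd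
  refine memLp_top_of_bound (Complex.measurable_ofReal.comp (hZmeas i j)).aestronglyMeasurable C ?_
  filter_upwards [ae_restrict_mem measurableSet_Icc] with t ht
  simpa using hC t ht i j

lemma int_prod (hZmeas : ∀ i j, Measurable fun t => Z t i j)
    (hZbdd : ∃ C : ℝ, ∀ t ∈ Set.Icc (0:ℝ) 1, ∀ i j, |Z t i j| ≤ C) (v w : L2mC m) (i k) :
    Integrable (fun t => ((Z t).map Complex.ofReal).mulVec (v t) i * Fp Z w t k) μ01 :=
  (int_mulVec hZmeas hZbdd v i).mul_of_top_left (Fp_memLp hZmeas hZbdd w k)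

lemma parts' (hZmeas : ∀ i j, Measurable fun t => Z t i j)
    (hZbdd : ∃ C : ℝ, ∀ t ∈ Set.Icc (0:ℝ) 1, ∀ i j, |Z t i j| ≤ C) (v w : L2mC m) (i k) :
    (∫ t in Set.Icc (0:ℝ) 1, ((Z t).map Complex.ofReal).mulVec (v t) i * Fp Z w t k) +
    (∫ t in Set.Icc (0:ℝ) 1, ((Z t).map Complex.ofReal).mulVec (w t) k * Fp Z v t i) =
    Fp Z v 1 i * Fp Z w 1 k := by
  have h1 : (1:ℝ) ∈ Set.Icc (0:ℝ) 1 := by simp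
  rw [Fp_apply hZmeas hZbdd v h1, Fp_apply hZmeas hZbdd w h1,
    ← parts _ _ (int_mulVec hZmeas hZbdd v i) (int_mulVec hZmeas hZbdd w k)]
  congr 1
  · exact setIntegral_congr_fun measurableSet_Icc fun t ht => by
      simp only [Fp_apply hZmeas hZbdd w ht]
  · exact setIntegral_congr_fun measurableSet_Icc fun t ht => by
      simp only [Fp_apply hZmeas hZbdd v ht]

lemma B_symm (hZmeas : ∀ i j, Measurable fun t => Z t i j)
    (hZbdd : ∃ C : ℝ, ∀ t ∈ Set.Icc (0:ℝ) 1, ∀ i j, |Z t i j| ≤ C) (v w : L2mC m)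
    (hv : ∀ i : Fin d, Fp Z v 1 (finSumFinEquiv (Sum.inr i)) = 0)
    (hw : ∀ i : Fin d, Fp Z w 1 (finSumFinEquiv (Sum.inr i)) = 0) :
    (∫ t in Set.Icc (0:ℝ) 1,
        ((Jc d).mulVec (((Z t).map Complex.ofReal).mulVec (v t))) ⬝ᵥ Fp Z w t) =
    ∫ t in Set.Icc (0:ℝ) 1,
        ((Jc d).mulVec (((Z t).map Complex.ofReal).mulVec (w t))) ⬝ᵥ Fp Z v t := by
  simp only [Jc_dot]
  rw [integral_finsetSum, integral_finsetSum]
  rotate_left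
  · exact fun i _ => (int_prod hZmeas hZbdd _ _ _ _).sub (int_prod hZmeas hZbdd _ _ _ _)
  · exact fun i _ => (int_prod hZmeas hZbdd _ _ _ _).sub (int_prod hZmeas hZbdd _ _ _ _)
  refine Finset.sum_congr rfl fun i _ => ?_
  rw [integral_sub (int_prod hZmeas hZbdd _ _ _ _) (int_prod hZmeas hZbdd _ _ _ _),
    integral_sub (int_prod hZmeas hZbdd _ _ _ _) (int_prod hZmeas hZbdd _ _ _ _)]
  have a1 := parts' hZmeas hZbdd v w (finSumFinEquiv (Sum.inl i)) (finSumFinEquiv (Sum.inr i))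
  have a2 := parts' hZmeas hZbdd v w (finSumFinEquiv (Sum.inr i)) (finSumFinEquiv (Sum.inl i))
  rw [hw, mul_zero] at a1
  rw [hv, zero_mul] at a2
  linear_combination a1 - a2

lemma mem_iff (hZmeas : ∀ i j, Measurable fun t => Z t i j)
    (hZbdd : ∃ C : ℝ, ∀ t ∈ Set.Icc (0:ℝ) 1, ∀ i j, |Z t i j| ≤ C) (v : L2mC m) :
    (∫ t in Set.Icc (0:ℝ) 1, ((Xblock Z t).map Complex.ofReal).mulVec (v t)) = 0 ↔
    ∀ i : Fin d, Fp Z v 1 (finSumFinEquiv (Sum.inr i)) = 0 := by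
  rw [funext_iff]
  refine forall_congr' fun i => ?_
  rw [Fp_apply hZmeas hZbdd v (by simp), eval_integral]
  · rfl
  · intro i
    exact int_mulVec hZmeas hZbdd v (finSumFinEquiv (Sum.inr i))

/-- complex conjugation on `L²` -/
lemma exists_conj (u : L2mC m) : ∃ c : L2mC m, ∀ᵐ t ∂μ01, ∀ j, c t j = star (u t j) := by
  have h : MemLp (fun t => (WithLp.toLp 2 (fun j => star (u t j)) : EuclideanSpace ℂ (Fin m))) 2 μ01 := by
    rw [memLp_piLp_iff]
    intro j
    exact (memLp_coord u j).star
  refine ⟨h.toLp _, ?_⟩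
  filter_upwards [h.coeFn_toLp] with t ht j
  rw [ht]

lemma inner_conj (u c w : L2mC m) (h : ∀ᵐ t ∂μ01, ∀ j, c t j = star (u t j)) :
    inner ℂ c w = ∫ t in Set.Icc (0:ℝ) 1, (u t) ⬝ᵥ (w t) := by
  rw [L2.inner_def]
  refine integral_congr_ae ?_
  filter_upwards [h] with t ht
  rw [PiLp.inner_apply, dotProduct]
  refine Finset.sum_congr rfl fun j _ => ?_
  simp [ht, mul_comm]

lemma exists_row (hZmeas : ∀ i j, Measurable fun t => Z t i j)
    (hZbdd : ∃ C : ℝ, ∀ t ∈ Set.Icc (0:ℝ) 1, ∀ i j, |Z t i j| ≤ C) :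
    ∃ x : Fin d → L2mC m, ∀ᵐ t ∂μ01, ∀ i j, x i t j = Z t (finSumFinEquiv (Sum.inr i)) j := by
  have h : ∀ i : Fin d, MemLp (fun t => (WithLp.toLp 2 (fun j => (Z t (finSumFinEquiv (Sum.inr i)) j : ℂ)) : EuclideanSpace ℂ (Fin m))) 2 μ01 := by
    intro i
    rw [memLp_piLp_iff]
    intro j
    exact (Z_memLp hZmeas hZbdd _ j).mono_exponent le_top
  refine ⟨fun i => (h i).toLp _, ?_⟩
  rw [ae_all_iff]
  intro i
  filter_upwards [(h i).coeFn_toLp] with t ht j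
  rw [ht]

lemma orth_iff (hZmeas : ∀ i j, Measurable fun t => Z t i j)
    (hZbdd : ∃ C : ℝ, ∀ t ∈ Set.Icc (0:ℝ) 1, ∀ i j, |Z t i j| ≤ C)
    (Vc : Submodule ℂ (L2mC m))
    (hVc : ∀ v : L2mC m, v ∈ Vc ↔ ∀ i : Fin d, Fp Z v 1 (finSumFinEquiv (Sum.inr i)) = 0)
    (u : L2mC m) :
    (∀ w ∈ Vc, ∫ t in Set.Icc (0:ℝ) 1, (u t) ⬝ᵥ (w t) = 0) ↔
    ∃ l : Fin d → ℂ, ∀ᵐ t ∂μ01, ∀ j,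
      u t j = ∑ i, l i * (Z t (finSumFinEquiv (Sum.inr i)) j : ℂ) := by
  obtain ⟨x, hx⟩ := exists_row (d := d) hZmeas hZbdd
  obtain ⟨c, hc⟩ := exists_conj u
  have hW : Vc = (Submodule.span ℂ (Set.range x))ᗮ := by
    ext w
    rw [hVc, Submodule.mem_orthogonal]
    have hi : ∀ i, inner ℂ (x i) w = Fp Z w 1 (finSumFinEquiv (Sum.inr i)) := by
      intro i
      rw [Fp_apply hZmeas hZbdd w (by simp), inner_conj (x i) (x i) w]
      · refine integral_congr_ae ?_
        filter_upwards [hx] with t ht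
        simp [dotProduct, Matrix.mulVec, ht]
      · filter_upwards [hx] with t ht j
        simp [ht]
    constructor
    · intro h y hy
      induction hy using Submodule.span_induction with
      | mem y hy => obtain ⟨i, rfl⟩ := hy; rw [hi, h]
      | zero => simp
      | add a b _ _ ha hb => rw [inner_add_left, ha, hb, add_zero]
      | smul r a _ ha => rw [inner_smul_left, ha, mul_zero]
    · intro h i
      rw [← hi]
      exact h _ (Submodule.subset_span ⟨i, rfl⟩)
  have hfin : FiniteDimensional ℂ (Submodule.span ℂ (Set.range x)) :=
    FiniteDimensional.span_of_finite ℂ (Set.finite_range x)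
  have h1 : (∀ w ∈ Vc, ∫ t in Set.Icc (0:ℝ) 1, (u t) ⬝ᵥ (w t) = 0) ↔ c ∈ Vcᗮ := by
    rw [Submodule.mem_orthogonal']
    refine forall₂_congr fun w _ => ?_
    rw [inner_conj u c w hc]
  rw [h1, hW, Submodule.orthogonal_orthogonal, Submodule.mem_span_range_iff_exists_fun]
  have hsum : ∀ l : Fin d → ℂ, ∀ᵐ t ∂μ01, ∀ j, (∑ i, l i • x i : L2mC m) t j =
      ∑ i, l i * (Z t (finSumFinEquiv (Sum.inr i)) j : ℂ) := by
    intro l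
    have h2 : ∀ᵐ t ∂μ01, ∀ i, (l i • x i : L2mC m) t = l i • x i t :=
      ae_all_iff.2 fun i => Lp.coeFn_smul _ _
    filter_upwards [Lp.coeFn_finsetSum Finset.univ (fun i => l i • x i), h2, hx] with t h3 h2 hx j
    rw [h3]
    simp [h2, hx]
  constructor
  · rintro ⟨l, hl⟩
    refine ⟨fun i => star (l i), ?_⟩
    filter_upwards [hsum l, hc] with t h1 h2 j
    rw [hl] at h1
    have := congrArg star ((h2 j).symm.trans (h1 j))
    simpa using this
  · rintro ⟨l, hl⟩
    refine ⟨fun i => star (l i), ?_⟩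
    refine Lp.ext ?_
    filter_upwards [hsum (fun i => star (l i)), hc, hl] with t h1 h2 h3
    ext j
    rw [h1, h2, h3]
    simp

lemma nondeg (hZmeas : ∀ i j, Measurable fun t => Z t i j)
    (hZbdd : ∃ C : ℝ, ∀ t ∈ Set.Icc (0:ℝ) 1, ∀ i j, |Z t i j| ≤ C)
    (Vc : Submodule ℂ (L2mC m))
    (hVc : ∀ v : L2mC m, v ∈ Vc ↔ ∀ i : Fin d, Fp Z v 1 (finSumFinEquiv (Sum.inr i)) = 0)
    (u : L2mC m) (hu : u ∈ Vc)
    (h : ∀ w ∈ Vc, ∫ t in Set.Icc (0:ℝ) 1, (u t) ⬝ᵥ (w t) = 0) : u = 0 := by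
  obtain ⟨c, hc⟩ := exists_conj u
  have hcV : c ∈ Vc := by
    rw [hVc] at hu ⊢
    intro i
    have := congrArg star (hu i)
    rw [Fp_apply hZmeas hZbdd _ (by simp)] at this ⊢
    rw [star_zero] at this
    rw [← this]
    change _ = (starRingEnd ℂ) _
    rw [← integral_conj]
    refine integral_congr_ae ?_
    filter_upwards [hc] with t ht
    simp [Matrix.mulVec, dotProduct, ht]
  have h2 : inner ℂ c c = (0:ℂ) := by rw [inner_conj u c c hc, h c hcV]
  rw [inner_self_eq_zero] at h2
  subst h2
  refine Lp.ext ?_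
  filter_upwards [hc, Lp.coeFn_zero (EuclideanSpace ℂ (Fin m)) 2 μ01] with t ht h0
  rw [h0] at ht ⊢
  ext j
  have := congrArg star (ht j)
  simpa using this.symm

end

section
variable {d m : ℕ} {Z : ℝ → Matrix (Fin (d + d)) (Fin m) ℝ}

lemma exists_U (hZmeas : ∀ i j, Measurable fun t => Z t i j)
    (hZbdd : ∃ C : ℝ, ∀ t ∈ Set.Icc (0:ℝ) 1, ∀ i j, |Z t i j| ≤ C) (v : L2mC m) (r : ℂ) :
    ∃ U : L2mC m, ∀ᵐ t ∂μ01, ∀ j, U t j = r * v t j -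
      ((Z t).map Complex.ofReal)ᵀ.mulVec ((Jc d).mulVec (Fp Z v t)) j := by
  have h : MemLp (fun t => (WithLp.toLp 2 (fun j => r * v t j -
      ((Z t).map Complex.ofReal)ᵀ.mulVec ((Jc d).mulVec (Fp Z v t)) j) :
        EuclideanSpace ℂ (Fin m))) 2 μ01 := by
    rw [memLp_piLp_iff]
    intro j
    refine ((memLp_coord v j).const_mul r).sub ?_
    simp only [Zt_formula]
    refine memLp_finsetSum _ fun i _ => ?_
    have hh : ∀ a b, MemLp (fun t => (Z t a j : ℂ) * Fp Z v t b) 2 μ01 := fun a b =>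
      MemLp.mono_exponent (MemLp.mul (p := ⊤) (q := ⊤) (r := ⊤) (Fp_memLp hZmeas hZbdd v b)
        (Z_memLp hZmeas hZbdd a j)) le_top
    exact (hh _ _).sub (hh _ _)
  refine ⟨h.toLp _, ?_⟩
  filter_upwards [h.coeFn_toLp] with t ht j
  rw [ht]

lemma int_dot (u w : L2mC m) : Integrable (fun t => (u t) ⬝ᵥ (w t)) μ01 := by
  simp only [dotProduct]
  exact integrable_finsetSum _ fun j _ => (memLp_coord u j).integrable_mul (memLp_coord w j)

lemma int_JF (hZmeas : ∀ i j, Measurable fun t => Z t i j)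
    (hZbdd : ∃ C : ℝ, ∀ t ∈ Set.Icc (0:ℝ) 1, ∀ i j, |Z t i j| ≤ C) (v w : L2mC m) :
    Integrable (fun t => ((Jc d).mulVec (((Z t).map Complex.ofReal).mulVec (w t))) ⬝ᵥ Fp Z v t)
      μ01 := by
  simp only [Jc_dot]
  exact integrable_finsetSum _ fun i _ =>
    (int_prod hZmeas hZbdd _ _ _ _).sub (int_prod hZmeas hZbdd _ _ _ _)

/-- the integral of `Zˢ v`, in coordinates -/
lemma integral_Zs (hZmeas : ∀ i j, Measurable fun t => Z t i j)
    (hZbdd : ∃ C : ℝ, ∀ t ∈ Set.Icc (0:ℝ) 1, ∀ i j, |Z t i j| ≤ C) (v : L2mC m) (s : ℂ)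
    (η : ℝ → Fin (d + d) → ℂ)
    (hη : ∀ᵐ t ∂μ01, (v t : Fin m → ℂ) = ((Zs Z s t)ᵀ * Jc d).mulVec (η t))
    {t : ℝ} (ht : t ∈ Set.Icc (0:ℝ) 1) (i : Fin (d + d)) :
    (∫ τ in (0:ℝ)..t, (Zs Z s τ * (Zs Z s τ)ᵀ * Jc d).mulVec (η τ)) i =
      (if (i : ℕ) < d then s else 1) * Fp Z v t i := by
  rw [intervalIntegral.integral_of_le ht.1, ← integral_Icc_eq_integral_Ioc]
  have hsub : Set.Icc (0:ℝ) t ⊆ Set.Icc 0 1 := Set.Icc_subset_Icc_right ht.2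
  have hη' := ae_restrict_of_ae_restrict_of_subset hsub hη
  have hf : ∀ τ k, (Zs Z s τ).mulVec (v τ) k =
      (if (k : ℕ) < d then s else 1) * ((Z τ).map Complex.ofReal).mulVec (v τ) k := by
    intro τ k
    simp only [Zs, Matrix.mulVec, dotProduct, Matrix.of_apply, Matrix.map_apply, Finset.mul_sum,
      mul_assoc]
  have e : ∫ τ in Set.Icc (0:ℝ) t, (Zs Z s τ * (Zs Z s τ)ᵀ * Jc d).mulVec (η τ) =
      ∫ τ in Set.Icc (0:ℝ) t, (Zs Z s τ).mulVec (v τ) := by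
    refine integral_congr_ae ?_
    filter_upwards [hη'] with τ h
    rw [h, Matrix.mulVec_mulVec, Matrix.mul_assoc]
  rw [e, eval_integral]
  · simp only [hf]
    rw [integral_const_mul, Fp_apply hZmeas hZbdd v ht]
  · intro k
    simp only [hf]
    exact (IntegrableOn.mono_set (int_mulVec hZmeas hZbdd v k) hsub).const_mul _

end

/-- **Eigenfunction characterization (proof of Proposition 5).**
For real `s ≠ 0`, `v ∈ V_ℂ` satisfies `K v = -(1/s) v` iff there is a solution
`η` of the complexified Jacobi equation with vanishing `q`-components at `t = 0`
and `t = 1` such that `v(t) = (Z_tˢ)ᵀ J η(t)` a.e. on `[0,1]`. -/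
theorem eigenfunction_iff_jacobi_boundary_solution
    (d m : ℕ) (hd : 0 < d) (hm : 0 < m)
    (Z : ℝ → Matrix (Fin (d + d)) (Fin m) ℝ)
    (hZmeas : ∀ i j, Measurable fun t => Z t i j)
    (hZbdd : ∃ C : ℝ, ∀ t ∈ Set.Icc (0:ℝ) 1, ∀ i j, |Z t i j| ≤ C)
    (Vc : Submodule ℂ (L2mC m))
    (hVc : ∀ v : L2mC m, v ∈ Vc ↔
      (∫ t in Set.Icc (0:ℝ) 1, ((Xblock Z t).map Complex.ofReal).mulVec (v t)) = 0)
    (Kc : ↥Vc →L[ℂ] ↥Vc)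
    (hKc : ∀ v w : ↥Vc,
      (∫ t in Set.Icc (0:ℝ) 1, ((Kc v : L2mC m) t) ⬝ᵥ ((w : L2mC m) t)) =
      ∫ t in Set.Icc (0:ℝ) 1,
        ((Jc d).mulVec (((Z t).map Complex.ofReal).mulVec ((v : L2mC m) t))) ⬝ᵥ
          (∫ τ in Set.Icc (0:ℝ) t, ((Z τ).map Complex.ofReal).mulVec ((w : L2mC m) τ)))
    (s : ℝ) (hs : s ≠ 0) :
    ∀ v : ↥Vc,
      Kc v = (-(1 / (s : ℂ))) • v ↔
      ∃ η : ℝ → Fin (d + d) → ℂ,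
        IsJacobiSolutionC Z (s : ℂ) η ∧
        (∀ i, η 0 (finSumFinEquiv (Sum.inr i)) = 0) ∧
        (∀ i, η 1 (finSumFinEquiv (Sum.inr i)) = 0) ∧
        (∀ᵐ t ∂μ01, (v : L2mC m) t = ((Zs Z (s : ℂ) t)ᵀ * Jc d).mulVec (η t)) := by
  intro v
  have hV : ∀ v : L2mC m, v ∈ Vc ↔ ∀ i : Fin d, Fp Z v 1 (finSumFinEquiv (Sum.inr i)) = 0 :=
    fun v => (hVc v).trans (mem_iff hZmeas hZbdd v)
  have hsc : (s : ℂ) ≠ 0 := by exact_mod_cast hs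
  obtain ⟨U, hU⟩ := exists_U hZmeas hZbdd (v : L2mC m) (1 / (s:ℂ))
  have step1 : Kc v = (-(1 / (s : ℂ))) • v ↔
      ∀ w ∈ Vc, ∫ t in Set.Icc (0:ℝ) 1,
        (((Kc v : L2mC m) + (1 / (s:ℂ)) • (v : L2mC m) : L2mC m) t) ⬝ᵥ (w t) = 0 := by
    have e0 : Kc v = (-(1 / (s : ℂ))) • v ↔
        ((Kc v : L2mC m) + (1 / (s:ℂ)) • (v : L2mC m) : L2mC m) = 0 := by
      rw [neg_smul, eq_neg_iff_add_eq_zero, ← Subtype.coe_inj]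
      simp
    rw [e0]
    constructor
    · intro h w _
      rw [h, ← integral_zero ℝ ℂ (μ := μ01)]
      refine integral_congr_ae ?_
      filter_upwards [Lp.coeFn_zero (EuclideanSpace ℂ (Fin m)) 2 μ01] with t h0
      rw [h0]
      simp
    · intro h
      exact nondeg hZmeas hZbdd Vc hV _
        (Vc.add_mem (Kc v).2 (Vc.smul_mem _ v.2)) h
  have step2 : ∀ w ∈ Vc, ∫ t in Set.Icc (0:ℝ) 1,
        (((Kc v : L2mC m) + (1 / (s:ℂ)) • (v : L2mC m) : L2mC m) t) ⬝ᵥ (w t) =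
      ∫ t in Set.Icc (0:ℝ) 1, (U t) ⬝ᵥ (w t) := by
    intro w hw
    have hk := hKc v ⟨w, hw⟩
    have e1 : ∫ t in Set.Icc (0:ℝ) 1,
        (((Kc v : L2mC m) + (1 / (s:ℂ)) • (v : L2mC m) : L2mC m) t) ⬝ᵥ (w t) =
        ∫ t in Set.Icc (0:ℝ) 1, (((Kc v : L2mC m) t) ⬝ᵥ (w t) +
          (1 / (s:ℂ)) * (((v : L2mC m) t) ⬝ᵥ (w t))) := by
      refine integral_congr_ae ?_
      filter_upwards [Lp.coeFn_add (Kc v : L2mC m) ((1 / (s:ℂ)) • (v : L2mC m)),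
        Lp.coeFn_smul (1 / (s:ℂ)) (v : L2mC m)] with t h1 h2
      rw [h1, Pi.add_apply, h2, Pi.smul_apply, WithLp.ofLp_add, WithLp.ofLp_smul,
        add_dotProduct, smul_dotProduct, smul_eq_mul]
    have e2 : ∫ t in Set.Icc (0:ℝ) 1, (U t) ⬝ᵥ (w t) =
        ∫ t in Set.Icc (0:ℝ) 1,
          (((Jc d).mulVec (((Z t).map Complex.ofReal).mulVec (w t))) ⬝ᵥ Fp Z (v : L2mC m) t +
          (1 / (s:ℂ)) * (((v : L2mC m) t) ⬝ᵥ (w t))) := by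
      refine integral_congr_ae ?_
      filter_upwards [hU] with t h1
      have h2 : (U t : Fin m → ℂ) = (1 / (s:ℂ)) • ((v : L2mC m) t : Fin m → ℂ) -
          ((Z t).map Complex.ofReal)ᵀ.mulVec ((Jc d).mulVec (Fp Z (v : L2mC m) t)) := by
        ext j
        rw [h1]
        rfl
      rw [h2, sub_dotProduct, smul_dotProduct, smul_eq_mul, Jc_dot_antisymm,
        Matrix.mulVec_transpose, ← Matrix.dotProduct_mulVec, dotProduct_comm _ ((Jc d).mulVec _)]
      ring
    rw [e1, e2, integral_add (int_dot _ _) ((int_dot _ _).const_mul _),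
      integral_add (int_JF hZmeas hZbdd _ _) ((int_dot _ _).const_mul _)]
    congr 1
    exact hk.trans (B_symm hZmeas hZbdd _ _ ((hV _).1 v.2) ((hV _).1 hw))
  have step3 : Kc v = (-(1 / (s : ℂ))) • v ↔ ∃ l : Fin d → ℂ, ∀ᵐ t ∂μ01, ∀ j,
      U t j = ∑ i, l i * (Z t (finSumFinEquiv (Sum.inr i)) j : ℂ) := by
    rw [step1, ← orth_iff hZmeas hZbdd Vc hV U]
    exact forall₂_congr fun w hw => by rw [step2 w hw]
  rw [step3]
  have hF0 : ∀ k, Fp Z (v : L2mC m) 0 k = 0 := by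
    intro k
    simp [Fp]
  constructor
  · rintro ⟨l, hl⟩
    obtain ⟨η, hdef⟩ : ∃ η : ℝ → Fin (d + d) → ℂ, ∀ t k, η t k =
        (if (k : ℕ) < d then (s:ℂ) else 1) * Fp Z (v : L2mC m) t k +
          Sum.elim (fun i : Fin d => (s:ℂ) * l i) (fun _ : Fin d => 0) (finSumFinEquiv.symm k) :=
      ⟨_, fun _ _ => rfl⟩
    have hη : ∀ᵐ t ∂μ01, ((v : L2mC m) t : Fin m → ℂ) = ((Zs Z (s : ℂ) t)ᵀ * Jc d).mulVec
        (η t) := by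
      filter_upwards [hl, hU] with t h1 h2
      ext j
      have h3 := (h2 j).symm.trans (h1 j)
      rw [Zt_formula] at h3
      rw [Zs_formula]
      have h4 : ((v : L2mC m) t) j = s * (∑ i, l i * (Z t (finSumFinEquiv (Sum.inr i)) j : ℂ)) +
          s * ∑ i : Fin d,
      ((Z t (finSumFinEquiv (Sum.inr i)) j : ℂ) * Fp Z (v : L2mC m) t (finSumFinEquiv (Sum.inl i))
        - (Z t (finSumFinEquiv (Sum.inl i)) j : ℂ) * Fp Z (v : L2mC m) t (finSumFinEquiv (Sum.inr i))) := by
        rw [← h3]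
        field_simp
        ring
      rw [h4, Finset.mul_sum, Finset.mul_sum, ← Finset.sum_add_distrib]
      refine Finset.sum_congr rfl fun i _ => ?_
      simp only [hdef, Equiv.symm_apply_apply, Sum.elim_inl, Sum.elim_inr]
      simp
      ring
    refine ⟨η, ?_, ?_, ?_, hη⟩
    · intro t ht
      ext k
      have := integral_Zs hZmeas hZbdd (v : L2mC m) (s:ℂ) _ hη ht k
      rw [Pi.add_apply, this]
      simp only [hdef, hF0]
      ring
    · intro i
      simp only [hdef, Equiv.symm_apply_apply, Sum.elim_inr, hF0]
      simp
    · intro i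
      simp only [hdef, Equiv.symm_apply_apply, Sum.elim_inr, (hV _).1 v.2 i]
      simp
  · rintro ⟨η, hsol, h0, -, hη⟩
    refine ⟨fun i => (1 / (s:ℂ)) * η 0 (finSumFinEquiv (Sum.inl i)), ?_⟩
    filter_upwards [hη, hU, ae_restrict_mem measurableSet_Icc] with t h1 h2 ht j
    have h3 : ∀ k, η t k = η 0 k + (if (k : ℕ) < d then (s:ℂ) else 1) * Fp Z (v : L2mC m) t k := by
      intro k
      rw [hsol t ht, Pi.add_apply, integral_Zs hZmeas hZbdd (v : L2mC m) (s:ℂ) _ hη ht k]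
    rw [h2 j, h1, Zs_formula, Zt_formula, Finset.mul_sum, ← Finset.sum_sub_distrib]
    refine Finset.sum_congr rfl fun i _ => ?_
    rw [h3, h3, h0]
    simp
    field_simp
    ring

end
end

section
/- Let A and R be real symmetric m×m matrices. Then ∑_{n=1}^∞ tr( R·(A² + (πn)² I)⁻¹ ) = tr( M · N⁻¹ ), where M = ∭_{0 ≤ τ₁ ≤ τ₂ ≤ t ≤ 1} exp((τ₂ − 2t)A) · R · exp((τ₂ − 2τ₁)A) dτ₂ dτ₁ dt and N = ∫₀¹ exp(−2tA) dt; in particular the series on the left converges. -/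
open MeasureTheory Filter Topology Matrix

noncomputable section

/-- Matrix exponential, defined by the convergent power series. -/
def mExp {m : ℕ} (M : Matrix (Fin m) (Fin m) ℝ) : Matrix (Fin m) (Fin m) ℝ :=
  ∑' k : ℕ, ((k.factorial : ℝ)⁻¹) • M ^ k

/-- Matrix sine, defined by the convergent power series. -/
def mSin {m : ℕ} (M : Matrix (Fin m) (Fin m) ℝ) : Matrix (Fin m) (Fin m) ℝ :=
  ∑' k : ℕ, (((-1 : ℝ) ^ k / ((2 * k + 1).factorial : ℝ))) • M ^ (2 * k + 1)

/-- Matrix hyperbolic cosine. -/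
def mCosh {m : ℕ} (M : Matrix (Fin m) (Fin m) ℝ) : Matrix (Fin m) (Fin m) ℝ :=
  (2⁻¹ : ℝ) • (mExp M + mExp (-M))

/-- Matrix hyperbolic sine. -/
def mSinh {m : ℕ} (M : Matrix (Fin m) (Fin m) ℝ) : Matrix (Fin m) (Fin m) ℝ :=
  (2⁻¹ : ℝ) • (mExp M - mExp (-M))

theorem mExp_eq_exp {m : ℕ} (M : Matrix (Fin m) (Fin m) ℝ) : mExp M = NormedSpace.exp M := by
  rw [NormedSpace.exp_eq_tsum ℝ]; rfl

theorem symm_diag {m : ℕ} (A : Matrix (Fin m) (Fin m) ℝ) (hA : A.IsSymm) :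
    ∃ (U : Matrix (Fin m) (Fin m) ℝ) (d : Fin m → ℝ),
      U * Uᵀ = 1 ∧ Uᵀ * U = 1 ∧ A = U * diagonal d * Uᵀ := by
  have hH : A.IsHermitian := by
    rw [Matrix.IsHermitian, conjTranspose_eq_transpose_of_trivial]; exact hA
  refine ⟨hH.eigenvectorUnitary, hH.eigenvalues, ?_, ?_, ?_⟩
  · have := Unitary.coe_mul_star_self hH.eigenvectorUnitary
    rwa [Unitary.coe_star, star_eq_conjTranspose, conjTranspose_eq_transpose_of_trivial] at this
  · have := Unitary.coe_star_mul_self hH.eigenvectorUnitary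
    rwa [star_eq_conjTranspose, conjTranspose_eq_transpose_of_trivial] at this
  · have := hH.spectral_theorem
    rw [Unitary.conjStarAlgAut_apply, star_eq_conjTranspose,
      conjTranspose_eq_transpose_of_trivial] at this
    exact this

theorem mExp_diag {m : ℕ} (U : Matrix (Fin m) (Fin m) ℝ) (d : Fin m → ℝ)
    (h1 : U * Uᵀ = 1) (h2 : Uᵀ * U = 1) (s : ℝ) :
    mExp (s • (U * diagonal d * Uᵀ)) = U * diagonal (fun k => Real.exp (s * d k)) * Uᵀ := by
  have hinv : U⁻¹ = Uᵀ := Matrix.inv_eq_right_inv h1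
  have hu : IsUnit U := ⟨⟨U, Uᵀ, h1, h2⟩, rfl⟩
  have : s • (U * diagonal d * Uᵀ) = U * diagonal (s • d) * U⁻¹ := by
    rw [hinv, diagonal_smul]; simp
  rw [mExp_eq_exp, this, Matrix.exp_conj _ _ hu, Matrix.exp_diagonal, hinv]
  congr 3
  ext k
  simp [Pi.exp_def, Real.exp_eq_exp_ℝ]

/-- The scalar triple integral. -/
def tripleInt (f : ℝ → ℝ → ℝ → ℝ) : ℝ :=
  ∫ t in Set.Icc (0:ℝ) 1, ∫ τ₂ in Set.Icc (0:ℝ) t, ∫ τ₁ in Set.Icc (0:ℝ) τ₂, f t τ₂ τ₁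

theorem tripleInt_eq (f : ℝ → ℝ → ℝ → ℝ) :
    tripleInt f = ∫ t in (0:ℝ)..1, ∫ τ₂ in (0:ℝ)..t, ∫ τ₁ in (0:ℝ)..τ₂, f t τ₂ τ₁ := by
  unfold tripleInt
  rw [intervalIntegral.integral_of_le zero_le_one, ← integral_Icc_eq_integral_Ioc]
  refine setIntegral_congr_fun measurableSet_Icc fun t ht => ?_
  try simp only
  rw [intervalIntegral.integral_of_le ht.1, ← integral_Icc_eq_integral_Ioc]
  refine setIntegral_congr_fun measurableSet_Icc fun s hs => ?_
  try simp only
  rw [intervalIntegral.integral_of_le hs.1, ← integral_Icc_eq_integral_Ioc]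

theorem tripleInt_sum {ι : Type*} (S : Finset ι) (c : ι → ℝ) (f : ι → ℝ → ℝ → ℝ → ℝ)
    (hf : ∀ k, Continuous fun p : (ℝ × ℝ) × ℝ => f k p.1.1 p.1.2 p.2) :
    tripleInt (fun t s r => ∑ k ∈ S, c k * f k t s r) = ∑ k ∈ S, c k * tripleInt (f k) := by
  have c1 : ∀ k, Continuous fun p : ℝ × ℝ => ∫ r in (0:ℝ)..p.2, f k p.1 p.2 r := fun k =>
    intervalIntegral.continuous_parametric_intervalIntegral_of_continuous
      (f := fun (p : ℝ × ℝ) r => f k p.1 p.2 r) (hf k) continuous_snd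
  have c2 : ∀ k, Continuous fun t : ℝ => ∫ s in (0:ℝ)..t, ∫ r in (0:ℝ)..s, f k t s r := fun k =>
    intervalIntegral.continuous_parametric_intervalIntegral_of_continuous
      (f := fun (t : ℝ) s => ∫ r in (0:ℝ)..s, f k t s r) (c1 k) continuous_id
  simp only [tripleInt_eq]
  have e1 : ∀ t s, ∫ r in (0:ℝ)..s, ∑ k ∈ S, c k * f k t s r
      = ∑ k ∈ S, c k * ∫ r in (0:ℝ)..s, f k t s r := by
    intro t s
    rw [intervalIntegral.integral_finsetSum]
    · simp only [intervalIntegral.integral_const_mul]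
    · intro k _
      exact (continuous_const.mul ((hf k).comp
        (by fun_prop : Continuous fun r : ℝ => ((t, s), r)))).intervalIntegrable _ _
  have e2 : ∀ t, ∫ s in (0:ℝ)..t, ∑ k ∈ S, c k * ∫ r in (0:ℝ)..s, f k t s r
      = ∑ k ∈ S, c k * ∫ s in (0:ℝ)..t, ∫ r in (0:ℝ)..s, f k t s r := by
    intro t
    rw [intervalIntegral.integral_finsetSum]
    · simp only [intervalIntegral.integral_const_mul]
    · intro k _
      exact (continuous_const.mul ((c1 k).comp (by fun_prop : Continuous fun r : ℝ => (t, r)))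
        ).intervalIntegrable _ _
  simp only [e1, e2]
  rw [intervalIntegral.integral_finsetSum]
  · simp only [intervalIntegral.integral_const_mul]
  · intro k _
    exact (continuous_const.mul (c2 k)).intervalIntegrable _ _

theorem int_exp_mul (c x : ℝ) (hc : c ≠ 0) :
    ∫ t in (0:ℝ)..x, Real.exp (c * t) = (Real.exp (c * x) - 1) / c := by
  have : ∀ t ∈ Set.uIcc 0 x, HasDerivAt (fun t => Real.exp (c * t) / c) (Real.exp (c * t)) t := by
    intro t _
    have h := (((hasDerivAt_id t).const_mul c).exp).div_const c
    simp only [id] at h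
    convert! h using 1
    field_simp
  rw [intervalIntegral.integral_eq_sub_of_hasDerivAt this
    ((by fun_prop : Continuous fun t => Real.exp (c * t)).intervalIntegrable _ _)]
  simp; ring

theorem nInt_eq (a : ℝ) (ha : a ≠ 0) :
    ∫ t in Set.Icc (0:ℝ) 1, Real.exp (-2 * t * a) = (1 - Real.exp (-2 * a)) / (2 * a) := by
  rw [integral_Icc_eq_integral_Ioc, ← intervalIntegral.integral_of_le zero_le_one]
  have : ∀ t : ℝ, Real.exp (-2 * t * a) = Real.exp ((-2 * a) * t) := fun t => by ring_nf
  simp only [this]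
  rw [int_exp_mul _ _ (by simpa using ha)]
  field_simp; ring

theorem nInt_ne (a : ℝ) : ∫ t in Set.Icc (0:ℝ) 1, Real.exp (-2 * t * a) ≠ 0 := by
  rw [integral_Icc_eq_integral_Ioc, ← intervalIntegral.integral_of_le zero_le_one]
  refine (intervalIntegral.intervalIntegral_pos_of_pos
    ((by fun_prop : Continuous fun t => Real.exp (-2 * t * a)).intervalIntegrable _ _)
    (fun x => Real.exp_pos _) zero_lt_one).ne'

theorem tripleInt_scalar (a : ℝ) (ha : a ≠ 0) :
    tripleInt (fun t s r => Real.exp ((s - 2 * t) * a) * Real.exp ((s - 2 * r) * a)) =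
      ((1 + Real.exp (-2 * a)) / (2 * a) - 2 * (1 - Real.exp (-2 * a)) / (4 * a ^ 2)) / (2 * a) := by
  rw [tripleInt_eq]
  have e1 : ∀ t s : ℝ, ∫ r in (0:ℝ)..s, Real.exp ((s - 2 * t) * a) * Real.exp ((s - 2 * r) * a)
      = Real.exp (-2 * a * t) * ((Real.exp (2 * a * s) - 1) / (2 * a)) := by
    intro t s
    have : ∀ r : ℝ, Real.exp ((s - 2 * t) * a) * Real.exp ((s - 2 * r) * a) =
        (Real.exp (-2 * a * t) * Real.exp (2 * a * s)) * Real.exp ((-2 * a) * r) := by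
      intro r; simp only [← Real.exp_add]; ring_nf
    simp only [this]
    rw [intervalIntegral.integral_const_mul, int_exp_mul _ _ (by simpa using ha)]
    have h : Real.exp (2 * a * s) * Real.exp (-2 * a * s) = 1 := by
      rw [← Real.exp_add]; ring_nf; simp
    have : Real.exp (-2 * a * t) * Real.exp (2 * a * s) * ((Real.exp (-2 * a * s) - 1) / (-2 * a))
      = Real.exp (-2 * a * t) * ((Real.exp (2 * a * s) * Real.exp (-2 * a * s)
          - Real.exp (2 * a * s)) / (-2 * a)) := by ring
    rw [this, h]
    field_simp; ring
  have e2 : ∀ t : ℝ, ∫ s in (0:ℝ)..t, Real.exp (-2 * a * t) * ((Real.exp (2 * a * s) - 1) / (2 * a))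
      = (1 - Real.exp (-2 * a * t)) / (2 * a) ^ 2 - t * Real.exp (-2 * a * t) / (2 * a) := by
    intro t
    rw [intervalIntegral.integral_const_mul, intervalIntegral.integral_div,
      intervalIntegral.integral_sub
        ((by fun_prop : Continuous fun t => Real.exp (2 * a * t)).intervalIntegrable _ _)
        (by simp), int_exp_mul _ _ (by simpa using ha)]
    have h : Real.exp (-2 * a * t) * Real.exp (2 * a * t) = 1 := by
      rw [← Real.exp_add]; ring_nf; simp
    simp only [intervalIntegral.integral_const, smul_eq_mul]
    have : Real.exp (-2 * a * t) * (((Real.exp (2 * a * t) - 1) / (2 * a) - (t - 0) * 1) / (2 * a))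
      = (Real.exp (-2 * a * t) * Real.exp (2 * a * t) - Real.exp (-2 * a * t)) / (2 * a) ^ 2
        - t * Real.exp (-2 * a * t) / (2 * a) := by field_simp; ring
    rw [this, h]
  simp only [e1, e2]
  have hd : ∀ t ∈ Set.uIcc (0:ℝ) 1, HasDerivAt
      (fun t => t / (2 * a) ^ 2 + t * Real.exp (-2 * a * t) / (2 * a) ^ 2
        + 2 * Real.exp (-2 * a * t) / (2 * a) ^ 3)
      ((1 - Real.exp (-2 * a * t)) / (2 * a) ^ 2 - t * Real.exp (-2 * a * t) / (2 * a)) t := by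
    intro t _
    have hx : HasDerivAt (fun t : ℝ => Real.exp (-2 * a * t))
        (Real.exp (-2 * a * t) * (-2 * a)) t := by
      simpa using ((hasDerivAt_id t).const_mul (-2 * a)).exp
    have := (((hasDerivAt_id t).div_const ((2 * a) ^ 2)).add
      (((hasDerivAt_id t).mul hx).div_const ((2 * a) ^ 2))).add
      ((hx.const_mul 2).div_const ((2 * a) ^ 3))
    convert! this using 1
    simp only [id]
    field_simp; ring
  rw [intervalIntegral.integral_eq_sub_of_hasDerivAt hd
    (Continuous.intervalIntegrable (by fun_prop) _ _)]
  simp only [mul_one, mul_zero, Real.exp_zero]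
  field_simp; ring

theorem tripleInt_zero :
    tripleInt (fun t s r => Real.exp ((s - 2 * t) * 0) * Real.exp ((s - 2 * r) * 0)) = 1 / 6 := by
  rw [tripleInt_eq]
  simp
  norm_num

theorem scalar_series (a : ℝ) :
    Tendsto (fun N : ℕ => ∑ n ∈ Finset.range N, (a * a + (Real.pi * ((n : ℝ) + 1)) ^ 2)⁻¹) atTop
      (𝓝 (tripleInt (fun t s r => Real.exp ((s - 2 * t) * a) * Real.exp ((s - 2 * r) * a)) *
        (∫ t in Set.Icc (0:ℝ) 1, Real.exp (-2 * t * a))⁻¹)) := by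
  have hpi := Real.pi_ne_zero
  by_cases ha : a = 0
  · subst ha
    rw [tripleInt_zero]
    have h := (hasSum_nat_add_iff' 1).mpr hasSum_zeta_two
    have h2 := (h.mul_left (1 / Real.pi ^ 2)).tendsto_sum_nat
    convert! h2 using 2
    · refine Finset.sum_congr rfl fun n _ => ?_
      push_cast
      field_simp
      simp
    · simp
      field_simp
  · rw [tripleInt_scalar a ha, nInt_eq a ha]
    have hpiC : (Real.pi : ℂ) ≠ 0 := by exact_mod_cast hpi
    have haC : (a : ℂ) ≠ 0 := by exact_mod_cast ha
    have hz : (a / Real.pi * Complex.I : ℂ) ∈ Complex.integerComplement := by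
      rw [Complex.mem_integerComplement_iff]
      rintro ⟨n, hn⟩
      have := congrArg Complex.im hn
      have e : (a / Real.pi : ℂ) = ((a / Real.pi : ℝ) : ℂ) := by push_cast; rfl
      rw [e] at this
      simp at this
      exact div_ne_zero ha hpi this.symm
    have h := (tendsto_logDeriv_euler_cot_sub hz).mul_const (Complex.I / (2 * a * Real.pi))
    have h' := (Complex.continuous_re.tendsto _).comp h
    have hE : (1 - Real.exp (-2 * a)) ≠ 0 := by
      rw [sub_ne_zero]; intro h; 
      have := (Real.exp_eq_one_iff _).mp h.symm
      simp [ha] at this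
    convert! h' using 1
    · funext N
      have : (∑ j ∈ Finset.range N, cotTerm (a / Real.pi * Complex.I) j) *
          (Complex.I / (2 * a * Real.pi)) =
          ((∑ n ∈ Finset.range N, (a * a + (Real.pi * ((n : ℝ) + 1)) ^ 2)⁻¹ : ℝ) : ℂ) := by
        rw [Finset.sum_mul]; push_cast
        refine Finset.sum_congr rfl fun n _ => ?_
        rw [cotTerm_identity hz]
        have hne : (a * a + (Real.pi * ((n : ℂ) + 1)) ^ 2) ≠ 0 := by
          have : (a * a + (Real.pi * ((n : ℝ) + 1)) ^ 2) ≠ 0 := by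
            have := Real.pi_pos
            exact (add_pos_of_nonneg_of_pos (mul_self_nonneg a) (by positivity)).ne'
          exact_mod_cast this
        have hden : ((a / Real.pi * Complex.I : ℂ) + (n + 1)) * (a / Real.pi * Complex.I - (n + 1))
            = - (a * a + (Real.pi * ((n : ℂ) + 1)) ^ 2) / Real.pi ^ 2 := by
          field_simp
          ring_nf
          simp only [Complex.I_sq]
          ring
        rw [hden]
        field_simp
        simp only [Complex.I_sq]
        ring
      rw [Function.comp, this, Complex.ofReal_re]
    · congr 1
      rw [Complex.cot_pi_eq_exp_ratio]
      have e : (2 * Real.pi * Complex.I * (a / Real.pi * Complex.I) : ℂ) = ((-2 * a : ℝ) : ℂ) := by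
        field_simp
        push_cast
        simp only [Complex.I_sq]
        ring
      rw [e, ← Complex.ofReal_exp]
      generalize Real.exp (-2 * a) = E at hE
      have hEC : (1 - E : ℂ) ≠ 0 := by exact_mod_cast hE
      rw [← Complex.ofReal_re (_ * _)]
      congr 1
      push_cast
      field_simp
      ring

/-- **Proposition 2, trace identity.**  For symmetric `A, R`,
`∑_{n=1}^∞ tr(R (A² + (πn)² I)⁻¹)
  = tr( (∭_{0≤τ₁≤τ₂≤t≤1} e^{(τ₂-2t)A} R e^{(τ₂-2τ₁)A} dτ₂ dτ₁ dt) (∫₀¹ e^{-2tA} dt)⁻¹ )`,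
and in particular the series converges. -/
theorem euler_trace_identity
    (m : ℕ) (A R : Matrix (Fin m) (Fin m) ℝ)
    (hA : A.IsSymm) (hR : R.IsSymm) :
    Tendsto (fun N : ℕ => ∑ n ∈ Finset.range N,
        (R * (A * A + ((Real.pi * ((n : ℝ) + 1)) ^ 2) • (1 : Matrix (Fin m) (Fin m) ℝ))⁻¹).trace)
      atTop
      (𝓝 (((Matrix.of fun i j =>
          ∫ t in Set.Icc (0:ℝ) 1, ∫ τ₂ in Set.Icc (0:ℝ) t, ∫ τ₁ in Set.Icc (0:ℝ) τ₂,
            (mExp ((τ₂ - 2 * t) • A) * R * mExp ((τ₂ - 2 * τ₁) • A)) i j) *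
        (mSetIntegral (Set.Icc (0:ℝ) 1) (fun t => mExp ((-2 * t) • A)))⁻¹).trace)) := by
  obtain ⟨U, d, h1, h2, rfl⟩ := symm_diag A hA
  set Q := Uᵀ * R * U with hQ
  set J : Fin m → Fin m → ℝ := fun k l =>
    tripleInt (fun t s r => Real.exp ((s - 2 * t) * d k) * Real.exp ((s - 2 * r) * d l)) with hJ
  set ν : Fin m → ℝ := fun k => ∫ t in Set.Icc (0:ℝ) 1, Real.exp (-2 * t * d k) with hν
  have hinv : ∀ v : Fin m → ℝ, (∀ k, v k ≠ 0) →
      (U * diagonal v * Uᵀ)⁻¹ = U * diagonal (fun k => (v k)⁻¹) * Uᵀ := by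
    intro v hv
    apply Matrix.inv_eq_right_inv
    calc U * diagonal v * Uᵀ * (U * diagonal (fun k => (v k)⁻¹) * Uᵀ)
        = U * diagonal v * (Uᵀ * U) * diagonal (fun k => (v k)⁻¹) * Uᵀ := by
          simp only [Matrix.mul_assoc]
      _ = 1 := by
          rw [h2, Matrix.mul_one, Matrix.mul_assoc U, diagonal_mul_diagonal]
          simp [hv, h1]
  have hN : mSetIntegral (Set.Icc (0:ℝ) 1) (fun t => mExp ((-2 * t) • (U * diagonal d * Uᵀ)))
      = U * diagonal ν * Uᵀ := by
    ext i j
    simp only [mSetIntegral, Matrix.of_apply, mExp_diag U d h1 h2]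
    simp only [Matrix.mul_apply (N := Uᵀ), Matrix.mul_diagonal, Matrix.transpose_apply]
    rw [integral_finsetSum]
    · refine Finset.sum_congr rfl fun k _ => ?_
      rw [integral_mul_const, integral_const_mul]
    · intro k _
      exact (Continuous.integrableOn_Icc (by fun_prop))
  have hM : (Matrix.of fun i j =>
          ∫ t in Set.Icc (0:ℝ) 1, ∫ τ₂ in Set.Icc (0:ℝ) t, ∫ τ₁ in Set.Icc (0:ℝ) τ₂,
            (mExp ((τ₂ - 2 * t) • (U * diagonal d * Uᵀ)) * R *
              mExp ((τ₂ - 2 * τ₁) • (U * diagonal d * Uᵀ))) i j)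
      = U * (Matrix.of fun k l => Q k l * J k l) * Uᵀ := by
    ext i j
    have key := tripleInt_sum (Finset.univ : Finset (Fin m × Fin m))
      (fun p => U i p.2 * Q p.2 p.1 * U j p.1)
      (fun p t s r => Real.exp ((s - 2 * t) * d p.2) * Real.exp ((s - 2 * r) * d p.1))
      (fun p => by fun_prop)
    have lhs : ∀ t s r : ℝ, (mExp ((s - 2 * t) • (U * diagonal d * Uᵀ)) * R *
              mExp ((s - 2 * r) • (U * diagonal d * Uᵀ))) i j =
        ∑ p : Fin m × Fin m, (U i p.2 * Q p.2 p.1 * U j p.1) *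
          (Real.exp ((s - 2 * t) * d p.2) * Real.exp ((s - 2 * r) * d p.1)) := by
      intro t s r
      rw [mExp_diag U d h1 h2, mExp_diag U d h1 h2]
      have : ∀ D E : Matrix (Fin m) (Fin m) ℝ, U * D * Uᵀ * R * (U * E * Uᵀ)
          = U * (D * Q * E) * Uᵀ := by
        intro D E; simp only [hQ, Matrix.mul_assoc]
      rw [this, Fintype.sum_prod_type]
      simp only [Matrix.mul_apply (M := U * _), Matrix.mul_apply (M := U), Matrix.mul_diagonal,
        Matrix.diagonal_mul, Matrix.transpose_apply, Finset.sum_mul]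
      refine Finset.sum_congr rfl fun x _ => Finset.sum_congr rfl fun y _ => ?_
      ring
    simp only [Matrix.of_apply, lhs]
    refine key.trans ?_
    rw [Fintype.sum_prod_type]
    simp only [Matrix.mul_apply (M := U * _), Matrix.mul_apply (M := U), Matrix.of_apply,
      Matrix.transpose_apply, Finset.sum_mul]
    refine Finset.sum_congr rfl fun x _ => Finset.sum_congr rfl fun y _ => ?_
    simp only [hJ]
    ring
  have htr : ∀ (B : Matrix (Fin m) (Fin m) ℝ) (v : Fin m → ℝ),
      (U * B * Uᵀ * (U * diagonal v * Uᵀ)).trace = ∑ k, B k k * v k := by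
    intro B v
    have : U * B * Uᵀ * (U * diagonal v * Uᵀ) = U * (B * diagonal v) * Uᵀ := by
      calc _ = U * B * (Uᵀ * U) * diagonal v * Uᵀ := by simp only [Matrix.mul_assoc]
        _ = _ := by rw [h2, Matrix.mul_one]; simp only [Matrix.mul_assoc]
    rw [this, Matrix.trace_mul_comm, ← Matrix.mul_assoc, h2, Matrix.one_mul]
    simp [Matrix.trace, Matrix.mul_diagonal]
  have hRQ : R = U * Q * Uᵀ := by
    calc R = (U * Uᵀ) * R * (U * Uᵀ) := by rw [h1]; simp
      _ = _ := by simp only [hQ, Matrix.mul_assoc]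
  have hterm : ∀ n : ℕ, (R * (U * diagonal d * Uᵀ * (U * diagonal d * Uᵀ) +
      ((Real.pi * ((n : ℝ) + 1)) ^ 2) • (1 : Matrix (Fin m) (Fin m) ℝ))⁻¹).trace
      = ∑ k, Q k k * (d k * d k + (Real.pi * ((n : ℝ) + 1)) ^ 2)⁻¹ := by
    intro n
    have e : U * diagonal d * Uᵀ * (U * diagonal d * Uᵀ) +
      ((Real.pi * ((n : ℝ) + 1)) ^ 2) • (1 : Matrix (Fin m) (Fin m) ℝ)
      = U * diagonal (fun k => d k * d k + (Real.pi * ((n : ℝ) + 1)) ^ 2) * Uᵀ := by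
      have e1 : U * diagonal d * Uᵀ * (U * diagonal d * Uᵀ)
          = U * diagonal (fun k => d k * d k) * Uᵀ := by
        calc _ = U * diagonal d * (Uᵀ * U) * diagonal d * Uᵀ := by simp only [Matrix.mul_assoc]
          _ = _ := by rw [h2, Matrix.mul_one, Matrix.mul_assoc U, diagonal_mul_diagonal]
      have e2 : diagonal (fun k => d k * d k + (Real.pi * ((n : ℝ) + 1)) ^ 2)
          = diagonal (fun k => d k * d k) +
            ((Real.pi * ((n : ℝ) + 1)) ^ 2) • (1 : Matrix (Fin m) (Fin m) ℝ) := by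
        rw [Matrix.smul_one_eq_diagonal, Matrix.diagonal_add]
      rw [e1, e2, Matrix.mul_add, Matrix.add_mul]
      simp [h1]
    rw [e, hinv _ (fun k => by
      have := Real.pi_pos
      exact (add_pos_of_nonneg_of_pos (mul_self_nonneg (d k)) (by positivity)).ne')]
    conv_lhs => rw [hRQ]
    rw [htr]
  rw [hM, hN, hinv ν (fun k => nInt_ne (d k)), htr]
  simp only [hterm]
  simp_rw [Finset.sum_comm (s := Finset.range _), ← Finset.mul_sum]
  refine tendsto_finsetSum _ fun k _ => ?_
  simp only [Matrix.of_apply, mul_assoc]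
  exact (scalar_series (d k)).const_mul (Q k k)

end
end
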